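/- arXiv:2509.05055 — 3 statements merged into one kernel-verified Lean document; each statement's English description precedes it below -/
import Mathlib

section
/- Let D be a graded digraph on n vertices that has at least one edge, and let Δ be its maximum degree. Then the oriented Ramsey number of D satisfies r⃗(D) ≤ 10⁹ · Δ³ · 2^(4Δ) · n. -/
/-- A tournament: a digraph in which every pair of distinct vertices is joined
by an edge in exactly one direction, and there are no loops. -/
def Digraph.IsTournament {V : Type*} (T : Digraph V) : Prop :=
  (∀ v : V, ¬ T.Adj v v) ∧ ∀ u v : V, u ≠ v → (T.Adj u v ↔ ¬ T.Adj v u)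

/-- `T` contains a copy of `G`: an injective map preserving directed edges. -/
def Digraph.ContainsCopy {V W : Type*} (T : Digraph W) (G : Digraph V) : Prop :=
  ∃ φ : V → W, Function.Injective φ ∧ ∀ u v : V, G.Adj u v → T.Adj (φ u) (φ v)

/-- The oriented Ramsey number of `G`: the least `N` such that every tournament on `N`
vertices contains a copy of `G`. -/
noncomputable def orientedRamsey {V : Type*} (G : Digraph V) : ℕ :=
  sInf {N : ℕ | ∀ T : Digraph (Fin N), T.IsTournament → T.ContainsCopy G}

/-- The degree of a vertex in the underlying undirected graph of a digraph. -/
noncomputable def Digraph.degree {V : Type*} (G : Digraph V) (v : V) : ℕ :=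
  Nat.card {u : V | G.Adj v u ∨ G.Adj u v}

open Finset Classical in
noncomputable def GOR.Bad (T : ℕ → ℕ → Prop) (A Y : Finset ℕ) (b k : ℕ) : Finset (Fin k → ℕ) :=
  (Fintype.piFinset (fun _ : Fin k => A)).filter
    (fun g => (Y.filter (fun y => ∀ j, T (g j) y)).card < b)

namespace GOR
open Finset Classical

lemma sum_tuples (Y : Finset ℕ) (P : ℕ → Prop) (t : ℕ)
    [DecidablePred P] [DecidablePred fun y : Fin t → ℕ => ∀ j, P (y j)] :
    ((Fintype.piFinset (fun _ : Fin t => Y)).filter (fun y => ∀ j, P (y j))).card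
      = (Y.filter P).card ^ t := by
  rw [← Fintype.card_piFinset_const]
  congr 1
  ext y
  simp only [mem_filter, Fintype.mem_piFinset]
  exact ⟨fun h j => ⟨h.1 j, h.2 j⟩, fun h => ⟨fun j => (h j).1, fun j => (h j).2⟩⟩

lemma double_count {α β : Type*} (S : Finset α) (U : Finset β) (P : α → β → Prop)
    [∀ y x, Decidable (P y x)] :
    ∑ y ∈ S, (U.filter (fun x => P y x)).card = ∑ x ∈ U, (S.filter (fun y => P y x)).card := by
  simp only [card_filter]
  exact sum_comm

lemma drc (T : ℕ → ℕ → Prop) (Y : Finset ℕ) (B : ℕ → Finset ℕ) (q s t Δ b : ℕ) (δ : ℝ)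
    (hδ : 0 < δ) (hq : 0 < q) (hs : 0 < s) (hY : Y.Nonempty) (hb : 0 < b)
    (hB : ∀ r < q, (B r).card = s)
    (hdeg : ∀ y ∈ Y, δ * (q * s) ≤
      ∑ r ∈ range q, (((B r).filter (fun x => T x y)).card : ℝ)) :
    ∃ r < q, ∃ A ⊆ B r, s * δ ^ (t+1) / 2 ≤ (A.card : ℝ) ∧
      ∀ k ≤ Δ, ((Bad T A Y b k).card : ℝ) * (δ ^ (t+1) * Y.card ^ (t+1))
        ≤ s ^ k * (2 * (Δ + 1) * b ^ (t+1)) := by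
  set YT := Fintype.piFinset (fun _ : Fin (t+1) => Y) with hYT
  let A : ℕ → (Fin (t+1) → ℕ) → Finset ℕ := fun r y => (B r).filter (fun x => ∀ j, T x (y j))
  have ha : (0:ℝ) < Y.card := by exact_mod_cast hY.card_pos
  have hYTc : (YT.card : ℝ) = (Y.card : ℝ) ^ (t+1) := by
    rw [hYT, Fintype.card_piFinset_const]; push_cast; rfl
  have hq' : (0:ℝ) < q := by exact_mod_cast hq
  have hs' : (0:ℝ) < s := by exact_mod_cast hs
  have hb' : (0:ℝ) < b := by exact_mod_cast hb
  have h1 : (q:ℝ) * s * (δ ^ (t+1) * Y.card ^ (t+1)) ≤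
      ∑ y ∈ YT, ∑ r ∈ range q, ((A r y).card : ℝ) := by
    have e1 : ∑ y ∈ YT, ∑ r ∈ range q, ((A r y).card : ℝ)
        = ∑ z ∈ (range q).sigma B, ((Y.filter (fun y => T z.2 y)).card : ℝ) ^ (t+1) := by
      rw [sum_comm, sum_sigma]
      refine sum_congr rfl fun r _ => ?_
      have := double_count YT (B r) (fun y x => ∀ j, T x (y j))
      have h' : ∀ x ∈ B r, (YT.filter (fun y => ∀ j, T x (y j))).card
          = (Y.filter (fun y => T x y)).card ^ (t+1) := by
        intro x _
        rw [hYT, sum_tuples Y (fun y => T x y)]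
      rw [sum_congr rfl h'] at this
      exact_mod_cast this
    have e2 : (Y.card : ℝ) * (δ * (q * s)) ≤
        ∑ z ∈ (range q).sigma B, ((Y.filter (fun y => T z.2 y)).card : ℝ) := by
      rw [sum_sigma]
      have : ∀ r ∈ range q, ∑ x ∈ B r, ((Y.filter (fun y => T x y)).card : ℝ)
          = ∑ y ∈ Y, (((B r).filter (fun x => T x y)).card : ℝ) := by
        intro r _
        exact_mod_cast double_count (B r) Y T
      rw [sum_congr rfl this, sum_comm, ← nsmul_eq_mul]
      exact card_nsmul_le_sum _ _ _ hdeg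
    have hc : (((range q).sigma B).card : ℝ) = q * s := by
      rw [card_sigma, sum_congr rfl (fun r hr => hB r (mem_range.1 hr))]
      simp
    rw [e1]
    have e3 := pow_sum_div_card_le_sum_pow (s := (range q).sigma B)
      (f := fun z => ((Y.filter (fun y => T z.2 y)).card : ℝ)) (fun _ _ => by positivity) t
    refine le_trans ?_ e3
    rw [hc, le_div_iff₀ (by positivity)]
    refine le_trans (le_of_eq ?_) (pow_le_pow_left₀ (by positivity) e2 (t+1))
    ring
  have h2 : ∀ k, ∑ y ∈ YT, ∑ r ∈ range q, ((Bad T (A r y) Y b k).card : ℝ)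
      ≤ q * (s ^ k * b ^ (t+1)) := by
    intro k
    rw [sum_comm, ← nsmul_eq_mul]
    have : (q • ((s:ℝ)^k * b^(t+1))) = (range q).card • ((s:ℝ)^k * b^(t+1)) := by simp
    rw [this]
    refine sum_le_card_nsmul _ _ _ fun r hr => ?_
    have hr' := hB r (mem_range.1 hr)
    have e1 := double_count YT ((Fintype.piFinset (fun _ : Fin k => B r)).filter
      (fun g => (Y.filter (fun y => ∀ j, T (g j) y)).card < b))
      (fun y g => ∀ j, ∀ i, T (g i) (y j))
    have e2 : ∀ y ∈ YT, Bad T (A r y) Y b k = (((Fintype.piFinset (fun _ : Fin k => B r)).filter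
      (fun g => (Y.filter (fun y => ∀ j, T (g j) y)).card < b)).filter
      (fun g => ∀ j, ∀ i, T (g i) (y j))) := by
      intro y _
      ext g
      simp only [Bad, A, mem_filter, Fintype.mem_piFinset]
      constructor
      · rintro ⟨h, h'⟩
        exact ⟨⟨fun j => (h j).1, h'⟩, fun j i => (h i).2 j⟩
      · rintro ⟨⟨h, h'⟩, h''⟩
        exact ⟨fun i => ⟨h i, fun j => h'' j i⟩, h'⟩
    have e3 : ∑ y ∈ YT, (Bad T (A r y) Y b k).card ≤ s ^ k * b ^ (t+1) := by
      rw [sum_congr rfl (fun y hy => congrArg card (e2 y hy)), e1]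
      calc _ ≤ (((Fintype.piFinset (fun _ : Fin k => B r)).filter
            (fun g => (Y.filter (fun y => ∀ j, T (g j) y)).card < b))).card • b ^ (t+1) := by
            refine sum_le_card_nsmul _ _ _ fun g hg => ?_
            rw [hYT, sum_tuples Y (fun y => ∀ i, T (g i) y)]
            exact Nat.pow_le_pow_left (mem_filter.1 hg).2.le _
        _ ≤ _ := by
            rw [smul_eq_mul]
            refine Nat.mul_le_mul_right _ ?_
            refine (card_filter_le _ _).trans ?_
            rw [Fintype.card_piFinset_const, hr']
    exact_mod_cast e3
  set Θ : ℝ := δ ^ (t+1) * Y.card ^ (t+1) with hΘ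
  have hΘpos : 0 < Θ := by positivity
  by_contra hcon
  push Not at hcon
  set D : ℝ := 2 * (Δ + 1) * b ^ (t+1) with hD
  have hDpos : 0 < D := by positivity
  -- potential
  have key : ∀ y ∈ YT, ∀ r ∈ range q,
      ((A r y).card : ℝ) / s - δ ^ (t+1) / 2
        - ∑ k ∈ range (Δ+1), (Θ / D) * ((Bad T (A r y) Y b k).card / s ^ k) < 0 := by
    intro y hy r hr
    have hr' := mem_range.1 hr
    have hsub : A r y ⊆ B r := filter_subset _ _
    have hcard : ((A r y).card : ℝ) ≤ s := by
      rw [← hB r hr']; exact_mod_cast card_le_card hsub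
    have hnn : ∀ k ∈ range (Δ+1), 0 ≤ (Θ / D) * ((Bad T (A r y) Y b k).card / (s:ℝ) ^ k) := by
      intro k _; positivity
    have hA1 : ((A r y).card : ℝ) / s ≤ 1 := by rw [div_le_one hs']; exact hcard
    by_cases hA : s * δ ^ (t+1) / 2 ≤ ((A r y).card : ℝ)
    · obtain ⟨k, hk, hk2⟩ := hcon r hr' (A r y) hsub hA
      have := single_le_sum hnn (mem_range.2 (Nat.lt_succ_of_le hk))
      have h3 : 1 < (Θ / D) * ((Bad T (A r y) Y b k).card / (s:ℝ) ^ k) := by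
        rw [div_mul_div_comm, one_lt_div (by positivity)]
        linarith
      have : 0 < δ ^ (t+1) := by positivity
      linarith
    · push Not at hA
      have h3 : ((A r y).card : ℝ) / s < δ ^ (t+1) / 2 := by
        rw [div_lt_iff₀ hs']; linarith
      have := sum_nonneg hnn
      linarith
  have hYTne : YT.Nonempty := by
    rw [hYT]; exact Fintype.piFinset_nonempty.2 fun _ => hY
  have hqne : (range q).Nonempty := nonempty_range_iff.2 hq.ne'
  have tot : ∑ y ∈ YT, ∑ r ∈ range q, (((A r y).card : ℝ) / s - δ ^ (t+1) / 2
        - ∑ k ∈ range (Δ+1), (Θ / D) * ((Bad T (A r y) Y b k).card / s ^ k)) < 0 :=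
    sum_neg (fun y hy => sum_neg (fun r hr => key y hy r hr) hqne) hYTne
  simp only [sum_sub_distrib, ← sum_div, sum_const, card_range, nsmul_eq_mul, hYTc] at tot
  have h4 : ∑ y ∈ YT, ∑ r ∈ range q, ∑ k ∈ range (Δ+1),
      (Θ / D) * ((Bad T (A r y) Y b k).card / (s:ℝ) ^ k) ≤ q * Θ / 2 := by
    calc _ = ∑ k ∈ range (Δ+1), (Θ / D) * ((∑ y ∈ YT, ∑ r ∈ range q,
          ((Bad T (A r y) Y b k).card : ℝ)) / (s:ℝ) ^ k) := by
          simp only [sum_div, mul_sum]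
          rw [sum_congr rfl (fun y _ => sum_comm), sum_comm]
      _ ≤ ∑ k ∈ range (Δ+1), (Θ / D) * (q * b ^ (t+1)) := by
          refine sum_le_sum fun k _ => ?_
          refine mul_le_mul_of_nonneg_left ?_ (by positivity)
          rw [div_le_iff₀ (by positivity)]
          linarith [h2 k]
      _ = q * Θ / 2 := by
          simp only [sum_const, card_range, nsmul_eq_mul, hD]
          push_cast
          field_simp
  have h5 : (q:ℝ) * Θ ≤ (∑ y ∈ YT, ∑ r ∈ range q, ((A r y).card : ℝ)) / s := by
    rw [le_div_iff₀ hs']; linarith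
  have h6 : (Y.card:ℝ)^(t+1) * (q * (δ^(t+1)/2)) = q * Θ / 2 := by rw [hΘ]; ring
  linarith
end GOR

namespace GOR
open Finset Classical

noncomputable def EE {V : Type} {k : ℕ} (Bd : Finset (Fin k → ℕ)) (e : Fin k → V)
    (μ : V → ℕ → ℝ) : ℝ := ∑ g ∈ Bd, ∏ j, μ (e j) (g j)

lemma EE_update_notMem {V : Type} {k : ℕ} (Bd : Finset (Fin k → ℕ)) (e : Fin k → V)
    (μ : V → ℕ → ℝ) (v : V) (hv : ∀ j, e j ≠ v) (d : ℕ → ℝ) :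
    EE Bd e (Function.update μ v d) = EE Bd e μ := by
  unfold EE
  refine sum_congr rfl fun g _ => prod_congr rfl fun j _ => ?_
  rw [Function.update_of_ne (hv j)]

lemma EE_average {V : Type} {k : ℕ} (Bd : Finset (Fin k → ℕ)) (e : Fin k → V)
    (he : Function.Injective e) (μ : V → ℕ → ℝ) (v : V) (hv : ∃ j, e j = v) (C : Finset ℕ)
    (hC : C.Nonempty)
    (hμ : ∀ x, μ v x = if x ∈ C then (1:ℝ) / C.card else 0) :
    ∑ x ∈ C, EE Bd e (Function.update μ v (fun z => if z = x then 1 else 0))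
      = C.card * EE Bd e μ := by
  obtain ⟨j0, hj0⟩ := hv
  have hc : (C.card : ℝ) ≠ 0 := by exact_mod_cast hC.card_pos.ne'
  unfold EE
  rw [sum_comm, mul_sum]
  refine sum_congr rfl fun g _ => ?_
  have h1 : ∀ x ∈ C, ∏ j, Function.update μ v (fun z => if z = x then (1:ℝ) else 0) (e j) (g j)
      = (if g j0 = x then 1 else 0) * ∏ j ∈ univ.erase j0, μ (e j) (g j) := by
    intro x _
    rw [← mul_prod_erase univ _ (mem_univ j0), hj0, Function.update_self]
    congr 1
    refine prod_congr rfl fun j hj => ?_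
    rw [Function.update_of_ne]
    rw [← hj0]
    exact fun h => (mem_erase.1 hj).1 (he h)
  rw [sum_congr rfl h1, ← sum_mul, ← mul_prod_erase univ (fun j => μ (e j) (g j)) (mem_univ j0),
    hj0, hμ, sum_ite_eq]
  split_ifs
  · field_simp
  · simp

lemma greedy {V W : Type} (L : Finset V) (C : V → Finset ℕ) (m Δ : ℕ) (hm : 1 ≤ m)
    (hΔ : 1 ≤ Δ)
    (hL : L.card ≤ m) (hC : ∀ v ∈ L, 2 * m ≤ (C v).card) (Ws : Finset W) (k : W → ℕ)
    (e : ∀ w, Fin (k w) → V) (he : ∀ w ∈ Ws, Function.Injective (e w))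
    (heL : ∀ w ∈ Ws, ∀ j, e w j ∈ L)
    (hdeg : ∀ v ∈ L, (Ws.filter (fun w => ∃ j, e w j = v)).card ≤ Δ)
    (Bd : ∀ w, Finset (Fin (k w) → ℕ)) (hBd : ∀ w ∈ Ws, (Bd w).card * Δ ^ (k w) < m ^ (k w)) :
    ∃ φ : V → ℕ, (∀ v ∈ L, φ v ∈ C v) ∧ Set.InjOn φ L ∧ ∀ w ∈ Ws, (fun j => φ (e w j)) ∉ Bd w := by
  let μ : Finset V → (V → ℕ) → V → ℕ → ℝ := fun S φ v x =>
    if v ∈ S then (if x = φ v then 1 else 0) else if x ∈ C v then (1:ℝ) / (C v).card else 0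
  have hμ0 : ∀ S φ v x, 0 ≤ μ S φ v x := by
    intro S φ v x
    simp only [μ]
    split_ifs <;> positivity
  have hE0 : ∀ S φ w, 0 ≤ EE (Bd w) (e w) (μ S φ) := fun S φ w =>
    sum_nonneg fun g _ => prod_nonneg fun j _ => hμ0 _ _ _ _
  have hm' : (0:ℝ) < m := by exact_mod_cast hm
  have hΔ' : (0:ℝ) < Δ := by exact_mod_cast hΔ
  have main : ∀ S : Finset V, S ⊆ L → ∃ φ : V → ℕ, (∀ v ∈ S, φ v ∈ C v) ∧ Set.InjOn φ S ∧
      ∀ w ∈ Ws, EE (Bd w) (e w) (μ S φ) ≤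
        (2 * Δ : ℝ) ^ (univ.filter (fun j => e w j ∈ S)).card *
          ((Bd w).card / (2 * m : ℝ) ^ (k w)) := by
    intro S
    induction S using Finset.induction_on with
    | empty =>
      intro _
      refine ⟨fun _ => 0, by simp, by simp, fun w hw => ?_⟩
      simp only [notMem_empty, filter_false, card_empty, pow_zero, one_mul]
      unfold EE
      have : ∀ g ∈ Bd w, ∏ j, μ ∅ (fun _ => 0) (e w j) (g j) ≤ 1 / (2 * m : ℝ) ^ (k w) := by
        intro g _
        have h := prod_le_prod (s := univ) (f := fun j => μ ∅ (fun _ => 0) (e w j) (g j))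
          (g := fun _ => 1 / (2 * m : ℝ)) (fun j _ => hμ0 ∅ (fun _ => 0) (e w j) (g j)) (by
            intro j _
            have h2 := hC _ (heL w hw j)
            have h3 : (2 * m : ℝ) ≤ (C (e w j)).card := by exact_mod_cast h2
            simp only [μ, notMem_empty, if_false]
            split_ifs
            · exact one_div_le_one_div_of_le (by positivity) h3
            · positivity)
        rw [prod_const, card_univ, Fintype.card_fin, one_div_pow] at h
        exact h
      refine (sum_le_card_nsmul _ _ _ this).trans (le_of_eq ?_)
      rw [nsmul_eq_mul]; ring
    | insert v S hvS ih =>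
      intro hSL
      obtain ⟨φ, h1, h2, h3⟩ := ih ((subset_insert _ _).trans hSL)
      have hvL := hSL (mem_insert_self v S)
      have hCv := hC v hvL
      have hCne : (C v).Nonempty := card_pos.1 (by omega)
      let U : ℕ → V → ℕ → ℝ := fun x =>
        Function.update (μ S φ) v (fun z => if z = x then 1 else 0)
      have hU0 : ∀ x w, 0 ≤ EE (Bd w) (e w) (U x) := by
        intro x w
        refine sum_nonneg fun g _ => prod_nonneg fun j _ => ?_
        simp only [U, Function.update_apply]
        split_ifs
        · beta_reduce
          split_ifs <;> norm_num
        · exact hμ0 _ _ _ _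
      let Wv := Ws.filter (fun w => ∃ j, e w j = v)
      let X : W → Finset ℕ := fun w => (C v).filter
        (fun x => 2 * Δ * EE (Bd w) (e w) (μ S φ) < EE (Bd w) (e w) (U x))
      have hX : ∀ w ∈ Wv, (X w).card * (2 * Δ) ≤ (C v).card := by
        intro w hw
        by_contra hlt
        push Not at hlt
        have hav := EE_average (Bd w) (e w) (he w (mem_filter.1 hw).1) (μ S φ) v
          (mem_filter.1 hw).2 (C v) hCne (by intro x; simp [μ, hvS])
        have hne : (X w).Nonempty := by
          rw [← card_pos]
          by_contra h0
          have : (X w).card = 0 := by omega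
          rw [this] at hlt; omega
        have a1 : ∑ x ∈ X w, (2 * Δ * EE (Bd w) (e w) (μ S φ)) < ∑ x ∈ X w, EE (Bd w) (e w) (U x) :=
          sum_lt_sum_of_nonempty hne fun x hx => (mem_filter.1 hx).2
        have a2 : ∑ x ∈ X w, EE (Bd w) (e w) (U x) ≤ ∑ x ∈ C v, EE (Bd w) (e w) (U x) :=
          sum_le_sum_of_subset_of_nonneg (filter_subset _ _) fun x _ _ => hU0 x w
        rw [sum_const, nsmul_eq_mul] at a1
        have a3 : ((C v).card : ℝ) ≤ (X w).card * (2 * Δ) := by exact_mod_cast hlt.le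
        have a4 := mul_le_mul_of_nonneg_right a3 (hE0 S φ w)
        have a5 : ∑ x ∈ C v, EE (Bd w) (e w) (U x) = (C v).card * EE (Bd w) (e w) (μ S φ) := hav
        linarith
      have hx : ∃ x ∈ C v, x ∉ S.image φ ∧ ∀ w ∈ Wv, x ∉ X w := by
        by_contra hno
        push Not at hno
        have hsub : C v ⊆ S.image φ ∪ Wv.biUnion X := by
          intro x hx
          by_cases hxi : x ∈ S.image φ
          · exact mem_union_left _ hxi
          · obtain ⟨w, hw, hw2⟩ := hno x hx hxi
            exact mem_union_right _ (mem_biUnion.2 ⟨w, hw, hw2⟩)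
        have c1 := (card_le_card hsub).trans (card_union_le _ _)
        have c2 : (S.image φ).card < m := by
          have : (insert v S).card ≤ m := (card_le_card hSL).trans hL
          rw [card_insert_of_notMem hvS] at this
          have := card_image_le (s := S) (f := φ)
          omega
        have c3 : (Wv.biUnion X).card ≤ ∑ w ∈ Wv, (X w).card := card_biUnion_le
        have c4 : (∑ w ∈ Wv, (X w).card) * (2 * Δ) ≤ Δ * (C v).card := by
          rw [sum_mul]
          calc _ ≤ Wv.card • (C v).card := sum_le_card_nsmul _ _ _ hX
            _ ≤ Δ * (C v).card := Nat.mul_le_mul_right _ (hdeg v hvL)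
        have c5 : (∑ w ∈ Wv, (X w).card) * 2 ≤ (C v).card := by
          refine Nat.le_of_mul_le_mul_left ?_ hΔ
          linarith
        omega
      obtain ⟨x, hxC, hxS, hxX⟩ := hx
      have hupd : μ (insert v S) (Function.update φ v x) = U x := by
        funext u z
        simp only [μ, U, Function.update_apply, mem_insert]
        by_cases huv : u = v
        · simp [huv]
        · simp [huv]
      refine ⟨Function.update φ v x, ?_, ?_, ?_⟩
      · intro u hu
        by_cases huv : u = v
        · subst huv; simpa using hxC
        · rw [Function.update_of_ne huv]
          exact h1 u ((mem_insert.1 hu).resolve_left huv)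
      · intro a ha c hc hac
        rw [mem_coe, mem_insert] at ha hc
        by_cases hav : a = v <;> by_cases hcv : c = v
        · rw [hav, hcv]
        · exfalso
          rw [hav, Function.update_self, Function.update_of_ne hcv] at hac
          exact hxS (mem_image.2 ⟨c, hc.resolve_left hcv, hac.symm⟩)
        · exfalso
          rw [hcv, Function.update_self, Function.update_of_ne hav] at hac
          exact hxS (mem_image.2 ⟨a, ha.resolve_left hav, hac⟩)
        · rw [Function.update_of_ne hav, Function.update_of_ne hcv] at hac
          exact h2 (ha.resolve_left hav) (hc.resolve_left hcv) hac
      · intro w hw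
        rw [hupd]
        by_cases hwv : ∃ j, e w j = v
        · have hwW : w ∈ Wv := mem_filter.2 ⟨hw, hwv⟩
          have h4 : EE (Bd w) (e w) (U x) ≤ 2 * Δ * EE (Bd w) (e w) (μ S φ) := by
            by_contra hlt
            push Not at hlt
            exact hxX w hwW (mem_filter.2 ⟨hxC, hlt⟩)
          obtain ⟨j0, hj0⟩ := hwv
          have h5 : (univ.filter (fun j => e w j ∈ insert v S)).card
              = (univ.filter (fun j => e w j ∈ S)).card + 1 := by
            rw [← card_insert_of_notMem (s := univ.filter (fun j => e w j ∈ S)) (a := j0)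
              (by simp [hj0, hvS])]
            congr 1
            ext j
            simp only [mem_filter, mem_univ, true_and, mem_insert]
            constructor
            · rintro (h | h)
              · exact Or.inl (he w hw (h.trans hj0.symm))
              · exact Or.inr h
            · rintro (h | h)
              · exact Or.inl (by rw [h, hj0])
              · exact Or.inr h
          rw [h5, pow_succ]
          have h6 := mul_le_mul_of_nonneg_left (h3 w hw) (by positivity : (0:ℝ) ≤ 2 * Δ)
          refine h4.trans (h6.trans (le_of_eq ?_))
          ring
        · push Not at hwv
          have h4 : EE (Bd w) (e w) (U x) = EE (Bd w) (e w) (μ S φ) :=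
            EE_update_notMem _ _ _ _ hwv _
          have h5 : (univ.filter (fun j => e w j ∈ insert v S))
              = (univ.filter (fun j => e w j ∈ S)) := by
            ext j
            simp [hwv j]
          rw [h4, h5]
          exact h3 w hw
  obtain ⟨φ, h1, h2, h3⟩ := main L (Subset.refl _)
  refine ⟨φ, h1, h2, fun w hw hbad => ?_⟩
  have h4 := h3 w hw
  have h5 : (univ.filter (fun j => e w j ∈ L)).card = k w := by
    rw [filter_true_of_mem (fun j _ => heL w hw j)]; simp
  rw [h5] at h4
  have h6 : (2 * Δ : ℝ) ^ (k w) * ((Bd w).card / (2 * m : ℝ) ^ (k w)) < 1 := by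
    rw [← mul_div_assoc, div_lt_one (by positivity), mul_pow, mul_pow, mul_assoc]
    refine mul_lt_mul_of_pos_left ?_ (by positivity)
    have := hBd w hw
    rw [mul_comm]
    exact_mod_cast this
  have h7 : (1:ℝ) ≤ EE (Bd w) (e w) (μ L φ) := by
    have := single_le_sum (f := fun g => ∏ j, μ L φ (e w j) (g j))
      (fun g _ => prod_nonneg fun j _ => hμ0 L φ (e w j) (g j)) hbad
    refine le_trans (le_of_eq ?_) this
    symm
    refine prod_eq_one fun j _ => ?_
    simp [μ, heL w hw j]
  linarith
end GOR

namespace GOR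
open Finset Classical

lemma arith (Δ : ℕ) (hΔ : 1 ≤ Δ) (m0 m1 k : ℕ) (hm1 : 1 ≤ m1) (hm0 : 1 ≤ m0) (hk : k ≤ Δ)
    (bad a δ : ℝ) (hbad : 0 ≤ bad)
    (ha : (4096 * Δ ^ 2 * 2 ^ (4 * Δ) : ℝ) * m1 ≤ 4 * 4 ^ Δ * a)
    (hδ : 1 / (2 * 4 ^ Δ) ≤ δ)
    (h : bad * (δ * a ^ (2 * Δ)) ≤ ((4096 * Δ ^ 2 * 2 ^ (4 * Δ) : ℝ) * m0) ^ k *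
      (2 * (Δ + 1) * (2 * m1) ^ (2 * Δ))) :
    bad * Δ ^ k < (m0:ℝ) ^ k := by
  have hΔ' : (1:ℝ) ≤ Δ := by exact_mod_cast hΔ
  have hm1' : (1:ℝ) ≤ m1 := by exact_mod_cast hm1
  have hm0' : (1:ℝ) ≤ m0 := by exact_mod_cast hm0
  have hQ2 : (2:ℝ) ^ (4 * Δ) = (4 ^ Δ) ^ 2 := by
    rw [← pow_mul, show (4:ℝ) = 2 ^ 2 by norm_num, ← pow_mul]; ring_nf
  have hQ1 : (1:ℝ) ≤ 4 ^ Δ := one_le_pow₀ (by norm_num)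
  rw [hQ2] at ha h
  set Q : ℝ := 4 ^ Δ with hQ
  have hQ0 : 0 < Q := by linarith
  have ha2 : 512 * Δ ^ 2 * Q * (2 * m1) ≤ a := by
    have : (4 * Q) * (512 * Δ ^ 2 * Q * (2 * m1)) ≤ (4 * Q) * a := by linarith
    exact le_of_mul_le_mul_left this (by positivity)
  have h1 : bad * (1 / (2 * Q) * (512 * Δ ^ 2 * Q * (2 * m1)) ^ (2 * Δ)) ≤
      (4096 * Δ ^ 2 * Q ^ 2 * m0) ^ k * (2 * (Δ + 1) * (2 * m1) ^ (2 * Δ)) := by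
    refine le_trans ?_ h
    gcongr
    exact le_trans (by positivity) hδ
  have h2 : bad * (512 * Δ ^ 2 * Q) ^ (2 * Δ) ≤
      (4096 * Δ ^ 2 * Q ^ 2 * m0) ^ k * (4 * Q * (Δ + 1)) := by
    rw [mul_pow _ (2 * (m1:ℝ))] at h1
    have hp : (0:ℝ) < (2 * m1) ^ (2 * Δ) / (2 * Q) := by positivity
    refine le_of_mul_le_mul_right ?_ hp
    refine le_trans (le_of_eq ?_) (h1.trans (le_of_eq ?_))
    · field_simp
    · field_simp
      ring
  have e1 : (512 * Δ ^ 2 * Q) ^ (2 * Δ) = ((64 * Δ) ^ Δ * (4096 * Δ ^ 3 * Q ^ 2) ^ Δ : ℝ) := by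
    rw [pow_mul, ← mul_pow]; congr 1; ring
  have h3 : bad * Δ ^ k * (512 * Δ ^ 2 * Q) ^ (2 * Δ) ≤
      m0 ^ k * ((4096 * Δ ^ 3 * Q ^ 2) ^ Δ * (4 * Q * (Δ + 1))) := by
    have : bad * Δ ^ k * (512 * Δ ^ 2 * Q) ^ (2 * Δ) ≤
        m0 ^ k * ((4096 * Δ ^ 3 * Q ^ 2) ^ k * (4 * Q * (Δ + 1))) := by
      have := mul_le_mul_of_nonneg_right h2 (by positivity : (0:ℝ) ≤ Δ ^ k)
      refine le_trans (le_of_eq (by ring)) (this.trans (le_of_eq ?_))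
      rw [show (4096 * Δ ^ 3 * Q ^ 2 : ℝ) = (4096 * Δ ^ 2 * Q ^ 2) * Δ by ring, mul_pow _ (Δ:ℝ),
        mul_pow _ (m0:ℝ)]
      ring
    refine this.trans ?_
    have hb : (1:ℝ) ≤ 4096 * Δ ^ 3 * Q ^ 2 := by
      have := one_le_pow₀ hΔ' (n := 3)
      have := one_le_pow₀ hQ1 (n := 2)
      nlinarith
    gcongr
  have h4 : 4 * Q * (Δ + 1) < ((64 * Δ) ^ Δ : ℝ) := by
    have : ((64 * Δ) ^ Δ : ℝ) = Q * (16 * Δ) ^ Δ := by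
      rw [hQ, ← mul_pow]; congr 1; ring
    rw [this]
    have : (16 * Δ : ℝ) ≤ (16 * Δ) ^ Δ := le_self_pow₀ (by linarith) (by omega)
    nlinarith
  have h5 : bad * Δ ^ k * (512 * Δ ^ 2 * Q) ^ (2 * Δ) < m0 ^ k * (512 * Δ ^ 2 * Q) ^ (2 * Δ) := by
    refine lt_of_le_of_lt h3 ?_
    refine mul_lt_mul_of_pos_left ?_ (by positivity)
    rw [e1, mul_comm]
    exact mul_lt_mul_of_pos_right h4 (by positivity)
  exact lt_of_mul_lt_mul_right h5 (by positivity)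

lemma sum_blocks (f : ℕ → ℝ) (w s q : ℕ) :
    ∑ r ∈ range q, ∑ x ∈ Ico (w + r * s) (w + r * s + s), f x = ∑ x ∈ Ico w (w + q * s), f x := by
  induction q with
  | zero => simp
  | succ q ih =>
    rw [sum_range_succ, ih, sum_Ico_consecutive _ (by omega) (by omega)]
    congr 2; ring

def RR (Δ : ℕ) : ℕ := 4096 * Δ ^ 2 * 2 ^ (4 * Δ)

lemma chain_step (T : ℕ → ℕ → Prop) (N : ℕ)
    (hmed : ∀ p q, p ≤ q → q < N → q - p ≤ 2 * ((Ico p q).filter (fun r => T r q)).card)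
    (Δ : ℕ) (hΔ : 1 ≤ Δ) (m0 m1 : ℕ) (hm0 : 1 ≤ m0) (hm1 : 1 ≤ m1) (p : ℕ) (Y : Finset ℕ)
    (hYsub : Y ⊆ Ico p (p + RR Δ * m1)) (hpN : p + RR Δ * m1 ≤ N)
    (hYc : RR Δ * m1 ≤ 4 * 4 ^ Δ * Y.card) (hp : RR Δ * (4 * Δ) * (m0 + m1) ≤ p) :
    ∃ p0, p0 + RR Δ * m0 ≤ p ∧ p ≤ p0 + RR Δ * (4 * Δ) * (m0 + m1) ∧
      ∃ A ⊆ Ico p0 (p0 + RR Δ * m0), RR Δ * m0 ≤ 4 * 4 ^ Δ * A.card ∧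
        ∀ k ≤ Δ, (Bad T A Y (2 * m1) k).card * Δ ^ k < m0 ^ k := by
  have hR : 0 < RR Δ := by unfold RR; positivity
  set q := 4 * Δ * (m1 / m0 + 1) with hq
  set s := RR Δ * m0 with hs
  have hspos : 0 < s := by positivity
  have hq0 : 0 < q := by positivity
  have hL1 : q * s ≤ RR Δ * (4 * Δ) * (m0 + m1) := by
    have : m0 * (m1 / m0 + 1) ≤ m0 + m1 := by
      have := Nat.mul_div_le m1 m0
      linarith
    calc q * s = RR Δ * (4 * Δ) * (m0 * (m1 / m0 + 1)) := by rw [hq, hs]; ring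
      _ ≤ _ := Nat.mul_le_mul_left _ this
  have hL2 : 4 * Δ * (RR Δ * m1) ≤ q * s := by
    have : m1 ≤ m0 * (m1 / m0 + 1) := (Nat.lt_mul_div_succ m1 hm0).le
    calc _ = RR Δ * (4 * Δ) * m1 := by ring
      _ ≤ RR Δ * (4 * Δ) * (m0 * (m1 / m0 + 1)) := Nat.mul_le_mul_left _ this
      _ = q * s := by rw [hq, hs]; ring
  set w := p - q * s with hw
  have hwp : w + q * s = p := by omega
  have hΔr : (1:ℝ) ≤ Δ := by exact_mod_cast hΔ
  set δ : ℝ := (1 / 2) * (1 - 1 / (4 * Δ)) with hδ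
  have hinv : 1 / (4 * (Δ:ℝ)) ≤ 1 / 4 := by
    apply one_div_le_one_div_of_le <;> linarith
  have hδ0 : 0 < δ := by rw [hδ]; linarith
  have hYne : Y.Nonempty := by
    rw [← card_pos]
    by_contra h0
    have : Y.card = 0 := by omega
    rw [this] at hYc
    have : 0 < RR Δ * m1 := by positivity
    omega
  obtain ⟨t, ht⟩ : ∃ t, 2 * Δ = t + 1 := ⟨2 * Δ - 1, by omega⟩
  obtain ⟨r, hr, A, hA, hAc, hAbad⟩ := drc T Y (fun r => Ico (w + r * s) (w + r * s + s)) q s t Δ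
    (2 * m1) δ hδ0 hq0 hspos hYne (by omega) (by intro r _; simp) (by
      intro y hy
      have hy' := mem_Ico.1 (hYsub hy)
      have e1 : ∑ r ∈ range q, (((Ico (w + r * s) (w + r * s + s)).filter (fun x => T x y)).card : ℝ)
          = (((Ico w p).filter (fun x => T x y)).card : ℝ) := by
        simp only [card_filter]
        push_cast
        rw [sum_blocks (fun x => if T x y then (1:ℝ) else 0), hwp]
      rw [e1]
      have h1 := hmed w y (by omega) (by omega)
      have h2 : ((Ico w y).filter (fun r => T r y)).card ≤
          ((Ico w p).filter (fun r => T r y)).card + (y - p) := by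
        rw [← Ico_union_Ico_eq_Ico (by omega : w ≤ p) hy'.1, filter_union]
        refine (card_union_le _ _).trans ?_
        refine Nat.add_le_add_left ((card_filter_le _ _).trans ?_) _
        simp
      have h3 : q * s ≤ 2 * ((Ico w p).filter (fun r => T r y)).card + RR Δ * m1 := by omega
      have h3' : (q * s : ℝ) ≤ 2 * ((Ico w p).filter (fun r => T r y)).card + RR Δ * m1 := by
        exact_mod_cast h3
      have h4 : (4 * Δ * (RR Δ * m1) : ℝ) ≤ q * s := by exact_mod_cast hL2
      have h5 : (RR Δ * m1 : ℝ) ≤ 1 / (4 * Δ) * (q * s) := by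
        rw [one_div, inv_mul_eq_div, le_div_iff₀ (by positivity)]
        linarith
      rw [hδ]
      linarith)
  have hθ : 1 / (2 * 4 ^ Δ) ≤ δ ^ (2 * Δ) := by
    rw [hδ, mul_pow]
    have h1 : (1 / 2 : ℝ) ^ (2 * Δ) = 1 / 4 ^ Δ := by
      rw [pow_mul, ← one_div_pow]; norm_num
    have h2 := one_add_mul_le_pow (a := -(1 / (4 * (Δ:ℝ)))) (by linarith) (2 * Δ)
    have h3 : (1:ℝ) + ((2 * Δ : ℕ):ℝ) * -(1 / (4 * (Δ:ℝ))) = 1 / 2 := by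
      push_cast; field_simp; norm_num
    rw [h3] at h2
    rw [h1, sub_eq_add_neg]
    calc (1 / (2 * 4 ^ Δ) : ℝ) = 1 / 4 ^ Δ * (1 / 2) := by field_simp
      _ ≤ _ := by gcongr
  have hRr : (RR Δ : ℝ) = 4096 * Δ ^ 2 * 2 ^ (4 * Δ) := by unfold RR; push_cast; rfl
  rw [← ht] at hAc hAbad
  refine ⟨w + r * s, ?_, ?_, A, hA, ?_, ?_⟩
  · have : (r + 1) * s ≤ q * s := Nat.mul_le_mul_right _ hr
    rw [add_mul] at this
    omega
  · omega
  · have : (s:ℝ) ≤ 4 * 4 ^ Δ * A.card := by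
      have h1 : (s:ℝ) * (1 / (2 * 4 ^ Δ)) ≤ s * δ ^ (2 * Δ) := by gcongr
      have h2 : (s:ℝ) * (1 / (2 * 4 ^ Δ)) ≤ 2 * A.card := by linarith
      rw [mul_one_div, div_le_iff₀ (by positivity)] at h2
      linarith
    exact_mod_cast this
  · intro k hk
    have hb := hAbad k hk
    have hYc' : ((RR Δ : ℝ)) * m1 ≤ 4 * 4 ^ Δ * Y.card := by exact_mod_cast hYc
    rw [hRr] at hYc'
    rw [hs] at hb
    push_cast at hb
    rw [hRr] at hb
    have := arith Δ hΔ m0 m1 k hm1 hm0 hk _ _ _ (by positivity) hYc' hθ hb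
    exact_mod_cast this

lemma chain (T : ℕ → ℕ → Prop) (N : ℕ)
    (hmed : ∀ p q, p ≤ q → q < N → q - p ≤ 2 * ((Ico p q).filter (fun r => T r q)).card)
    (Δ : ℕ) (hΔ : 1 ≤ Δ) (H : ℕ) : ∀ (m : ℕ → ℕ), (∀ i ≤ H, 1 ≤ m i) →
    2 * (RR Δ * (4 * Δ)) * ∑ i ∈ range (H+1), m i ≤ N →
    ∃ (A : ℕ → Finset ℕ) (p : ℕ), A 0 ⊆ Ico p (p + RR Δ * m 0) ∧ p + RR Δ * m 0 ≤ N ∧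
      N + RR Δ * (4 * Δ) * m 0 ≤ p + 2 * (RR Δ * (4 * Δ)) * ∑ i ∈ range (H+1), m i ∧
      (∀ i ≤ H, A i ⊆ Ico p N) ∧
      (∀ i j, i < j → j ≤ H → ∀ x ∈ A i, ∀ y ∈ A j, x < y) ∧
      (∀ i ≤ H, RR Δ * m i ≤ 4 * 4 ^ Δ * (A i).card) ∧
      ∀ i < H, ∀ k ≤ Δ, (Bad T (A i) (A (i+1)) (2 * m (i+1)) k).card * Δ ^ k < m i ^ k := by
  induction H with
  | zero =>
    intro m hm hN
    simp only [zero_add, sum_range_one] at hN ⊢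
    have h1 : RR Δ * m 0 ≤ RR Δ * (4 * Δ) * m 0 := by
      rw [mul_right_comm]
      exact Nat.le_mul_of_pos_right _ (by omega)
    have h2 : 2 * (RR Δ * (4 * Δ)) * m 0 = 2 * (RR Δ * (4 * Δ) * m 0) := by ring
    rw [h2] at hN ⊢
    refine ⟨fun _ => Ico (N - RR Δ * m 0) N, N - RR Δ * m 0, ?_, by omega, by omega, ?_, ?_, ?_, ?_⟩
    · refine Ico_subset_Ico_right (by omega)
    · intro i _; exact Subset.refl _
    · intro i j hij hj; omega
    · intro i hi
      have : i = 0 := by omega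
      subst this
      rw [Nat.card_Ico]
      have h3 : N - (N - RR Δ * m 0) = RR Δ * m 0 := by omega
      rw [h3]
      exact Nat.le_mul_of_pos_left _ (by positivity)
    · intro i hi; omega
  | succ H ih =>
    intro m hm hN
    rw [sum_range_succ'] at hN ⊢
    set S := ∑ i ∈ range (H+1), m (i+1) with hS
    rw [mul_add] at hN ⊢
    obtain ⟨A', p', h1, h2, h3, h4, h5, h6, h7⟩ := ih (fun i => m (i+1))
      (fun i hi => hm (i+1) (by omega)) (by rw [← hS]; omega)
    simp only [zero_add] at h1 h2 h3
    rw [← hS] at h3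
    have e0 : 2 * (RR Δ * (4 * Δ)) * m 0 = 2 * (RR Δ * (4 * Δ) * m 0) := by ring
    have e1 : RR Δ * (4 * Δ) * (m 0 + m 1) = RR Δ * (4 * Δ) * m 0 + RR Δ * (4 * Δ) * m 1 := by ring
    rw [e0] at hN ⊢
    obtain ⟨p, g1, g2, A, g3, g4, g5⟩ := chain_step T N hmed Δ hΔ (m 0) (m 1) (hm 0 (by omega))
      (hm 1 (by omega)) p' (A' 0) h1 h2 (h6 0 (by omega)) (by rw [e1]; omega)
    rw [e1] at g2
    refine ⟨fun i => Nat.casesOn i A A', p, g3, by omega, by omega, ?_, ?_, ?_, ?_⟩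
    · intro i hi
      cases i with
      | zero => exact g3.trans (Ico_subset_Ico_right (by omega))
      | succ i => exact (h4 i (by omega)).trans (Ico_subset_Ico_left (by omega))
    · intro i j hij hj x hx y hy
      cases j with
      | zero => omega
      | succ j =>
        have hy' := mem_Ico.1 (h4 j (by omega) hy)
        cases i with
        | zero =>
          have hx' := mem_Ico.1 (g3 hx)
          omega
        | succ i => exact h5 i j (by omega) (by omega) x hx y hy
    · intro i hi
      cases i with
      | zero => exact g4
      | succ i => exact h6 i (by omega)
    · intro i hi
      cases i with
      | zero => exact g5
      | succ i => exact h7 i (by omega)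
end GOR

namespace GOR
open Finset Classical

noncomputable def score {X : Type} (T : X → X → Prop) : List X → ℕ
  | [] => 0
  | x :: l => l.countP (fun y => decide (T x y)) + score T l

noncomputable def cross {X : Type} (T : X → X → Prop) (l1 l2 : List X) : ℕ :=
  (l1.map fun x => l2.countP (fun y => decide (T x y))).sum

lemma score_append {X : Type} (T : X → X → Prop) (l1 l2 : List X) :
    score T (l1 ++ l2) = score T l1 + score T l2 + cross T l1 l2 := by
  induction l1 with
  | nil => simp [score, cross]
  | cons x l ih =>
    simp only [List.cons_append, score, ih, cross, List.countP_append, List.map_cons, List.sum_cons]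
    omega

lemma cross_perm {X : Type} (T : X → X → Prop) (l1 l2 l3 : List X) (h : l2.Perm l3) :
    cross T l1 l2 = cross T l1 l3 := by
  unfold cross
  congr 1
  refine List.map_congr_left fun x _ => ?_
  exact h.countP_eq _

lemma cross_cons_right {X : Type} (T : X → X → Prop) (l1 l3 : List X) (v : X) :
    cross T l1 (v :: l3) = cross T l1 l3 + l1.countP (fun x => decide (T x v)) := by
  induction l1 with
  | nil => simp [cross]
  | cons x l ih =>
    simp only [cross, List.map_cons, List.sum_cons, List.countP_cons] at ih ⊢
    omega

lemma score_move {X : Type} (T : X → X → Prop) (l1 l2 l3 : List X) (v : X)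
    (h : score T (l1 ++ (v :: (l2 ++ l3))) ≤ score T (l1 ++ (l2 ++ (v :: l3)))) :
    l2.countP (fun y => decide (T v y)) ≤ l2.countP (fun x => decide (T x v)) := by
  rw [score_append, score_append,
    cross_perm T l1 (v :: (l2 ++ l3)) (l2 ++ (v :: l3)) List.perm_middle.symm, score_append T l2] at h
  simp only [score, score_append, cross_cons_right, List.countP_append] at h
  omega

lemma exists_median (N : ℕ) (hN : 0 < N) (T : Digraph (Fin N)) (hT : T.IsTournament) :
    ∃ σ : ℕ → Fin N, Set.InjOn σ (Set.Iio N) ∧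
      ∀ p q, p ≤ q → q < N →
        q - p ≤ 2 * ((Ico p q).filter (fun r => T.Adj (σ r) (σ q))).card := by
  obtain ⟨l, hl, hmax⟩ := ((List.finRange N).permutations.toFinset).exists_max_image
    (score T.Adj) ⟨List.finRange N, by simp⟩
  simp only [List.mem_toFinset, List.mem_permutations] at hl hmax
  have hlen : l.length = N := by rw [hl.length_eq, List.length_finRange]
  have hnd : l.Nodup := hl.nodup_iff.2 (List.nodup_finRange N)
  refine ⟨fun r => l.getD r ⟨0, hN⟩, ?_, ?_⟩
  · intro a ha b hb hab
    simp only [Set.mem_Iio] at ha hb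
    simp only [] at hab
    rw [List.getD_eq_getElem _ _ (by omega), List.getD_eq_getElem _ _ (by omega)] at hab
    exact (hnd.getElem_inj_iff).1 hab
  · intro p q hpq hq
    set l2 := (l.drop p).take (q - p) with hl2
    have hq' : q < l.length := by omega
    have hdec : l = l.take p ++ (l2 ++ (l[q] :: l.drop (q+1))) := by
      have h1 : l.drop p = l2 ++ (l.drop p).drop (q - p) := (List.take_append_drop _ _).symm
      rw [List.drop_drop, show p + (q - p) = q by omega, List.drop_eq_getElem_cons hq'] at h1
      rw [← h1, List.take_append_drop]
    have hmv := score_move T.Adj (l.take p) l2 (l.drop (q+1)) l[q] (by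
      rw [← hdec]
      refine hmax _ (List.Perm.trans ?_ hl)
      conv_rhs => rw [hdec]
      exact List.Perm.append_left _ List.perm_middle.symm)
    have hlen2 : l2.length = q - p := by
      rw [hl2, List.length_take, List.length_drop]; omega
    have hnot : l[q] ∉ l2 := by
      intro hmem
      rw [hdec] at hnd
      have h1 := (List.nodup_append.1 (List.nodup_append.1 hnd).2.1).2.2
      exact h1 _ hmem _ List.mem_cons_self rfl
    have hsplit : l2.length = l2.countP (fun x => decide (T.Adj x l[q]))
        + l2.countP (fun y => decide (T.Adj l[q] y)) := by
      rw [List.length_eq_countP_add_countP (fun x => decide (T.Adj x l[q]))]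
      congr 1
      refine List.countP_congr fun x hx => ?_
      have hne : l[q] ≠ x := fun h => hnot (h ▸ hx)
      have := hT.2 l[q] x hne
      simp [this]
    have hmap : l2 = (List.range' p (q - p)).map (fun r => l.getD r ⟨0, hN⟩) := by
      refine List.ext_getElem (by simp [hlen2]) fun i h1 h2 => ?_
      rw [hlen2] at h1
      simp only [hl2, List.getElem_take, List.getElem_drop, List.getElem_map, List.getElem_range']
      rw [List.getD_eq_getElem _ _ (by omega)]
      congr 1; omega
    have hcard : ((Ico p q).filter (fun r => T.Adj (l.getD r ⟨0, hN⟩) (l.getD q ⟨0, hN⟩))).card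
        = l2.countP (fun x => decide (T.Adj x l[q])) := by
      rw [hmap, List.countP_map, List.getD_eq_getElem _ _ hq', List.countP_eq_length_filter]
      rfl
    simp only [] at hcard ⊢
    rw [hcard]
    omega

lemma compress {V : Type} [Fintype V] [Nonempty V] (D : Digraph V) (f : V → ℕ)
    (hf : ∀ u v : V, D.Adj u v → f v = f u + 1) :
    ∃ (g : V → ℕ) (H : ℕ), (∀ u v : V, D.Adj u v → g v = g u + 1) ∧ (∀ v, g v ≤ H) ∧
      ∀ i ≤ H, ∃ v, g v = i := by
  let I := (univ : Finset V).image f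
  let r : ℕ → ℕ := fun x => (I.filter (fun z => z < x)).card
  have hfI : ∀ v, f v ∈ I := fun v => mem_image_of_mem _ (mem_univ v)
  have hIpos : 0 < I.card := card_pos.2 ⟨_, hfI (Classical.arbitrary V)⟩
  have hlt : ∀ x ∈ I, r x < I.card := by
    intro x hx
    exact card_lt_card ⟨filter_subset _ _, fun h => by simpa using h hx⟩
  have hmono : ∀ x ∈ I, ∀ y, x < y → r x < r y := by
    intro x hx y hxy
    refine card_lt_card ⟨fun z hz => ?_, fun h => ?_⟩
    · rw [mem_filter] at hz ⊢
      exact ⟨hz.1, by omega⟩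
    · have := h (mem_filter.2 ⟨hx, hxy⟩)
      simp at this
  have hinj : Set.InjOn r I := by
    intro x hx y hy hxy
    rcases lt_trichotomy x y with h | h | h
    · have := hmono x hx y h; omega
    · exact h
    · have := hmono y hy x h; omega
  have himg : I.image r = range I.card := by
    refine eq_of_subset_of_card_le ?_ ?_
    · intro z hz
      obtain ⟨x, hx, rfl⟩ := mem_image.1 hz
      exact mem_range.2 (hlt x hx)
    · rw [card_range, card_image_of_injOn hinj]
  refine ⟨fun v => r (f v), I.card - 1, ?_, ?_, ?_⟩
  · intro u v huv
    have h1 := hf u v huv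
    simp only [r]
    rw [h1, ← card_insert_of_notMem (s := I.filter (fun z => z < f u)) (a := f u) (by simp)]
    congr 1
    ext z
    simp only [mem_filter, mem_insert]
    constructor
    · rintro ⟨h, h'⟩
      by_cases hz : z = f u
      · exact Or.inl hz
      · exact Or.inr ⟨h, by omega⟩
    · rintro (h | h)
      · exact ⟨h ▸ hfI u, by omega⟩
      · exact ⟨h.1, by omega⟩
  · intro v
    have := hlt _ (hfI v)
    simp only []
    omega
  · intro i hi
    have : i ∈ I.image r := by rw [himg, mem_range]; omega
    obtain ⟨x, hx, rfl⟩ := mem_image.1 this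
    obtain ⟨v, _, rfl⟩ := mem_image.1 hx
    exact ⟨v, rfl⟩

lemma embed {V : Type} [Fintype V] (D : Digraph V) (Δ : ℕ) (hΔ : 1 ≤ Δ)
    (hdeg : ∀ v : V, D.degree v ≤ Δ) (g : V → ℕ) (H : ℕ)
    (hg : ∀ u v : V, D.Adj u v → g v = g u + 1) (hgH : ∀ v, g v ≤ H)
    (T : ℕ → ℕ → Prop) (A : ℕ → Finset ℕ) (m : ℕ → ℕ)
    (hmdef : ∀ i, m i = ((univ : Finset V).filter (fun v => g v = i)).card)
    (hm : ∀ i ≤ H, 1 ≤ m i)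
    (hA0 : 2 * m 0 ≤ (A 0).card)
    (hbad : ∀ i < H, ∀ k ≤ Δ,
      (Bad T (A i) (A (i+1)) (2 * m (i+1)) k).card * Δ ^ k < m i ^ k) :
    ∃ φ : V → ℕ, (∀ v, φ v ∈ A (g v)) ∧ (∀ u v, g u = g v → φ u = φ v → u = v) ∧
      ∀ u v, D.Adj u v → T (φ u) (φ v) := by
  have hin : ∀ w, ((univ : Finset V).filter (fun u => D.Adj u w)).card ≤ Δ := by
    intro w
    refine le_trans ?_ (hdeg w)
    unfold Digraph.degree
    rw [Nat.card_eq_card_toFinset]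
    exact card_le_card fun u hu => by simp at hu ⊢; exact Or.inr hu
  have hout : ∀ w, ((univ : Finset V).filter (fun u => D.Adj w u)).card ≤ Δ := by
    intro w
    refine le_trans ?_ (hdeg w)
    unfold Digraph.degree
    rw [Nat.card_eq_card_toFinset]
    exact card_le_card fun u hu => by simp at hu ⊢; exact Or.inl hu
  have main : ∀ i ≤ H + 1, ∃ φ : V → ℕ, (∀ v, g v < i → φ v ∈ A (g v)) ∧
      (∀ u v, g u < i → g u = g v → φ u = φ v → u = v) ∧
      (∀ u v, D.Adj u v → g v < i → T (φ u) (φ v)) ∧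
      ∀ w, g w = i → 2 * m i ≤ ((A i).filter (fun y => ∀ u, D.Adj u w → T (φ u) y)).card := by
    intro i
    induction i with
    | zero =>
      intro _
      refine ⟨fun _ => 0, by simp, by simp, by simp, fun w hw => ?_⟩
      rw [filter_true_of_mem]
      · exact hA0
      · intro y _ u hu
        have := hg u w hu
        omega
    | succ i ih =>
      intro hi
      obtain ⟨φ, h1, h2, h3, h4⟩ := ih (by omega)
      let Nb : V → Finset V := fun w => univ.filter (fun u => D.Adj u w)
      let e : ∀ w, Fin (Nb w).card → V := fun w j => ((Nb w).equivFin.symm j).1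
      have heAdj : ∀ w j, D.Adj (e w j) w := fun w j =>
        (mem_filter.1 ((Nb w).equivFin.symm j).2).2
      have heSurj : ∀ w u, D.Adj u w → ∃ j, e w j = u := fun w u hu =>
        ⟨(Nb w).equivFin ⟨u, mem_filter.2 ⟨mem_univ _, hu⟩⟩, by simp [e]⟩
      obtain ⟨ψ, p1, p2, p3⟩ := greedy (univ.filter (fun v => g v = i))
        (fun v => (A i).filter (fun y => ∀ u, D.Adj u v → T (φ u) y)) (m i) Δ (hm i (by omega)) hΔ
        (hmdef i).ge (fun v hv => h4 v (mem_filter.1 hv).2)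
        (univ.filter (fun v => g v = i + 1)) (fun w => (Nb w).card) e
        (fun w _ => Subtype.val_injective.comp (Equiv.injective _))
        (by
          intro w hw j
          have := hg _ _ (heAdj w j)
          have := (mem_filter.1 hw).2
          exact mem_filter.2 ⟨mem_univ _, by omega⟩)
        (by
          intro v _
          refine le_trans (card_le_card ?_) (hout v)
          intro w hw
          obtain ⟨j, hj⟩ := (mem_filter.1 hw).2
          exact mem_filter.2 ⟨mem_univ _, hj ▸ heAdj w j⟩)
        (fun w => Bad T (A i) (A (i+1)) (2 * m (i+1)) (Nb w).card)
        (by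
          intro w hw
          have h5 := (mem_filter.1 hw).2
          have h6 := hgH w
          exact hbad i (by omega) _ (hin w))
      have p1' : ∀ v, g v = i → ψ v ∈ A i ∧ ∀ u, D.Adj u v → T (φ u) (ψ v) := fun v hv =>
        mem_filter.1 (p1 v (mem_filter.2 ⟨mem_univ _, hv⟩))
      refine ⟨fun v => if g v = i then ψ v else φ v, ?_, ?_, ?_, ?_⟩
      · intro v hv
        by_cases hvi : g v = i
        · simp only [hvi, if_true]
          exact (p1' v hvi).1
        · simp only [hvi, if_false]
          exact h1 v (by omega)
      · intro u v hu huv heq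
        by_cases hui : g u = i
        · have hvi : g v = i := by omega
          simp only [hui, hvi, if_true] at heq
          exact p2 (by simpa using hui) (by simpa using hvi) heq
        · have hvi : g v ≠ i := by omega
          simp only [hui, hvi, if_false] at heq
          exact h2 u v (by omega) huv heq
      · intro u v huv hv
        have h5 := hg u v huv
        have hui : g u ≠ i := by omega
        by_cases hvi : g v = i
        · simp only [hui, hvi, if_true, if_false]
          exact (p1' v hvi).2 u huv
        · simp only [hui, hvi, if_false]
          exact h3 u v huv (by omega)
      · intro w hw
        have h5 := p3 w (mem_filter.2 ⟨mem_univ _, hw⟩)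
        have hei : ∀ j, g (e w j) = i := fun j => by
          have := hg _ _ (heAdj w j); omega
        have h6 : (fun j => ψ (e w j)) ∈ Fintype.piFinset (fun _ : Fin (Nb w).card => A i) :=
          Fintype.mem_piFinset.2 fun j => (p1' _ (hei j)).1
        have h7 : 2 * m (i+1) ≤ ((A (i+1)).filter (fun y => ∀ j, T (ψ (e w j)) y)).card := by
          by_contra hlt
          push Not at hlt
          exact h5 (mem_filter.2 ⟨h6, hlt⟩)
        refine h7.trans (card_le_card fun y hy => ?_)
        rw [mem_filter] at hy ⊢
        refine ⟨hy.1, fun u hu => ?_⟩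
        obtain ⟨j, rfl⟩ := heSurj w u hu
        simp only [hei j, if_true]
        exact hy.2 j
  obtain ⟨φ, h1, h2, h3, _⟩ := main (H+1) le_rfl
  have hlt : ∀ v, g v < H + 1 := fun v => Nat.lt_succ_of_le (hgH v)
  exact ⟨φ, fun v => h1 v (hlt v), fun u v => h2 u v (hlt u), fun u v huv => h3 u v huv (hlt v)⟩
end GOR

/-- If `D` is a graded digraph on `n` vertices with at least one edge and
maximum degree `Δ`, then `r⃗(D) ≤ 10⁹ · Δ³ · 2^(4Δ) · n`. -/
theorem graded_oriented_ramsey_upper {V : Type} [Fintype V] (D : Digraph V) (n Δ : ℕ)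
    (hn : Fintype.card V = n)
    (hgraded : ∃ f : V → ℕ, ∀ u v : V, D.Adj u v → f v = f u + 1)
    (hedge : ∃ u v : V, D.Adj u v)
    (hdeg : ∀ v : V, D.degree v ≤ Δ) :
    orientedRamsey D ≤ 10 ^ 9 * Δ ^ 3 * 2 ^ (4 * Δ) * n := by
  classical
  obtain ⟨f, hf⟩ := hgraded
  obtain ⟨u0, v0, huv0⟩ := hedge
  have : Nonempty V := ⟨u0⟩
  have hΔ : 1 ≤ Δ := by
    refine le_trans ?_ (hdeg u0)
    unfold Digraph.degree
    rw [Nat.card_eq_card_toFinset]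
    exact Finset.card_pos.2 ⟨v0, by simp [huv0]⟩
  have hn0 : 0 < n := hn ▸ Fintype.card_pos
  obtain ⟨g, H, hg, hgH, hsurj⟩ := GOR.compress D f hf
  refine Nat.sInf_le ?_
  intro T hT
  have hN0 : 0 < 10 ^ 9 * Δ ^ 3 * 2 ^ (4 * Δ) * n := by positivity
  obtain ⟨σ, hσ, hmed⟩ := GOR.exists_median _ hN0 T hT
  let m : ℕ → ℕ := fun i => ((Finset.univ : Finset V).filter (fun v => g v = i)).card
  have hm : ∀ i ≤ H, 1 ≤ m i := by
    intro i hi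
    obtain ⟨v, hv⟩ := hsurj i hi
    exact Finset.card_pos.2 ⟨v, by simp [hv]⟩
  have hsum : ∑ i ∈ Finset.range (H+1), m i = n := by
    rw [← hn, ← Finset.card_univ]
    exact (Finset.card_eq_sum_card_fiberwise
      (fun v _ => by simpa using Nat.lt_succ_of_le (hgH v))).symm
  obtain ⟨A, p, _, _, _, hAN, hAlt, hAc, hAbad⟩ := GOR.chain (fun a b => T.Adj (σ a) (σ b)) _
    (fun p q h1 h2 => by convert hmed p q h1 h2) Δ hΔ H m hm (by
      rw [hsum]
      unfold GOR.RR
      refine Nat.mul_le_mul_right _ ?_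
      calc 2 * (4096 * Δ ^ 2 * 2 ^ (4 * Δ) * (4 * Δ)) = 32768 * Δ ^ 3 * 2 ^ (4 * Δ) := by ring
        _ ≤ _ := by gcongr; norm_num)
  obtain ⟨φ, h1, h2, h3⟩ := GOR.embed D Δ hΔ hdeg g H hg hgH (fun a b => T.Adj (σ a) (σ b)) A m
    (fun i => by simp only [m]) hm (by
      have h := hAc 0 (by omega)
      have h' : 8 * 4 ^ Δ * m 0 ≤ GOR.RR Δ * m 0 := by
        refine Nat.mul_le_mul_right _ ?_
        unfold GOR.RR
        have e1 : 2 ^ (4 * Δ) = 4 ^ Δ * 4 ^ Δ := by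
          rw [← pow_add, show 4 = 2 ^ 2 by norm_num, ← pow_mul]; congr 1; ring
        rw [e1]
        have e2 : 1 ≤ Δ ^ 2 := Nat.one_le_pow _ _ hΔ
        have e3 : 1 ≤ 4 ^ Δ := Nat.one_le_pow _ _ (by norm_num)
        calc 8 * 4 ^ Δ ≤ 4096 * 1 * (4 ^ Δ * 1) := by omega
          _ ≤ _ := by gcongr
      refine Nat.le_of_mul_le_mul_left ?_ (by positivity : 0 < 4 * 4 ^ Δ)
      linarith) hAbad
  have hφN : ∀ v, φ v < 10 ^ 9 * Δ ^ 3 * 2 ^ (4 * Δ) * n := fun v =>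
    (Finset.mem_Ico.1 (hAN _ (hgH v) (h1 v))).2
  refine ⟨fun v => σ (φ v), ?_, h3⟩
  intro u v huv
  have h4 : φ u = φ v := hσ (hφN u) (hφN v) huv
  rcases lt_trichotomy (g u) (g v) with h | h | h
  · have := hAlt _ _ h (hgH v) _ (h1 u) _ (h1 v); omega
  · exact h2 u v h h4
  · have := hAlt _ _ h (hgH u) _ (h1 v) _ (h1 u); omega
end

section
/- Let D be a graded digraph on n vertices that has at least one edge, with maximum in-degree Δ⁻ and maximum out-degree Δ⁺. Then the oriented Ramsey number of D satisfies r⃗(D) ≤ 10⁹ · Δ⁺ · (Δ⁻)² · 2^(4Δ⁻) · n. -/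
/-- The in-degree of a vertex of a digraph. -/
noncomputable def Digraph.inDegree {V : Type*} (G : Digraph V) (v : V) : ℕ :=
  Nat.card {u : V | G.Adj u v}

/-- The out-degree of a vertex of a digraph. -/
noncomputable def Digraph.outDegree {V : Type*} (G : Digraph V) (v : V) : ℕ :=
  Nat.card {u : V | G.Adj v u}

open Classical in
noncomputable def gfwd {α : Type*} (T : α → α → Prop) : List α → ℕ
  | [] => 0
  | x :: l => l.countP (fun y => decide (T x y)) + gfwd T l

open Classical in
noncomputable def gcross {α : Type*} (T : α → α → Prop) (l₁ l₂ : List α) : ℕ :=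
  (l₁.map (fun x => l₂.countP (fun y => decide (T x y)))).sum

theorem gfwd_append {α : Type*} (T : α → α → Prop) (l₁ l₂ : List α) :
    gfwd T (l₁ ++ l₂) = gfwd T l₁ + gfwd T l₂ + gcross T l₁ l₂ := by
  induction l₁ with
  | nil => simp [gfwd, gcross]
  | cons x l ih =>
    simp only [List.cons_append, gfwd, ih, gcross, List.countP_append, List.map_cons, List.sum_cons]
    omega

theorem gcross_perm {α : Type*} (T : α → α → Prop) {l₁ l₁' l₂ l₂' : List α}
    (h₁ : l₁.Perm l₁') (h₂ : l₂.Perm l₂') : gcross T l₁ l₂ = gcross T l₁' l₂' := by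
  unfold gcross
  simp only [h₂.countP_eq]
  exact (h₁.map _).sum_eq

theorem gfwd_le {α : Type*} (T : α → α → Prop) (l : List α) : gfwd T l ≤ l.length * l.length := by
  induction l with
  | nil => simp [gfwd]
  | cons x l ih =>
    classical
    have := List.countP_le_length (p := fun y => decide (T x y)) (l := l)
    simp only [gfwd, List.length_cons]
    nlinarith

open Classical in
theorem median_list {α : Type*} (T : α → α → Prop)
    (hT : ∀ u v : α, u ≠ v → ¬ T u v → T v u) (l₀ : List α) (hnd : l₀.Nodup) :
    ∃ l : List α, l.Perm l₀ ∧ ∀ l₁ l₂ l₃ : List α, ∀ v, l = l₁ ++ (l₂ ++ v :: l₃) →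
      l₂.length ≤ 2 * l₂.countP (fun y => decide (T y v)) := by
  obtain ⟨k, ⟨l, hl, hk⟩, hmax⟩ : ∃ k, (∃ l : List α, l.Perm l₀ ∧ gfwd T l = k) ∧
      ∀ l' : List α, l'.Perm l₀ → gfwd T l' ≤ k := by
    have hbd : ∀ k, (∃ l : List α, l.Perm l₀ ∧ gfwd T l = k) → k ≤ l₀.length * l₀.length := by
      rintro k ⟨l, hl, rfl⟩
      rw [← hl.length_eq]; exact gfwd_le T l
    refine ⟨Nat.findGreatest (fun k => ∃ l : List α, l.Perm l₀ ∧ gfwd T l = k)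
      (l₀.length * l₀.length), ?_, ?_⟩
    · exact Nat.findGreatest_spec (P := fun k => ∃ l : List α, l.Perm l₀ ∧ gfwd T l = k)
        (hbd _ ⟨l₀, List.Perm.refl _, rfl⟩) ⟨l₀, List.Perm.refl _, rfl⟩
    · intro l' h'
      exact Nat.le_findGreatest (hbd _ ⟨l', h', rfl⟩) ⟨l', h', rfl⟩
  refine ⟨l, hl, ?_⟩
  rintro l₁ l₂ l₃ v rfl
  have hp : (v :: l₂).Perm (l₂ ++ [v]) := (List.perm_append_singleton v l₂).symm
  have hm := hmax (l₁ ++ ((v :: l₂) ++ l₃)) (by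
    refine List.Perm.trans ?_ hl
    refine List.Perm.append_left _ ?_
    have := hp.append_right l₃
    simpa using this)
  have e1 : l₂ ++ v :: l₃ = (l₂ ++ [v]) ++ l₃ := by simp
  rw [← hk, e1, gfwd_append, gfwd_append, gfwd_append T l₁, gfwd_append T (l₂ ++ [v]),
    gcross_perm T hp (List.Perm.refl l₃),
    gcross_perm T (List.Perm.refl l₁) (hp.append_right l₃), gfwd_append T l₂ [v]] at hm
  have e2 : gcross T l₂ [v] = l₂.countP (fun y => decide (T y v)) := by
    unfold gcross
    clear hm e1 hp hmax hl hk
    induction l₂ with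
    | nil => simp
    | cons a l ih =>
      rw [List.map_cons, List.sum_cons, ih, List.countP_cons (l := l)]
      simp [add_comm]
  rw [e2] at hm
  simp only [gfwd, List.countP_nil] at hm
  have hnd' : (l₁ ++ (l₂ ++ v :: l₃)).Nodup := hl.nodup_iff.2 hnd
  have hv : v ∉ l₂ := by
    intro h
    have h2 := (List.nodup_append.1 (List.nodup_append.1 hnd').2.1).2.2
    exact h2 v h v (by simp) rfl
  have h3 := List.length_eq_countP_add_countP (fun y => decide (T y v)) (l := l₂)
  have h4 : l₂.countP (fun y => decide (¬ (decide (T y v)) = true)) ≤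
      l₂.countP (fun y => decide (T v y)) := by
    apply List.countP_mono_left
    intro y hy h
    simp only [decide_eq_true_eq] at h ⊢
    exact hT y v (fun e => hv (e ▸ hy)) h
  omega

open Classical in
theorem median_order {N : ℕ} (T : Fin N → Fin N → Prop)
    (hT : ∀ u v, u ≠ v → ¬ T u v → T v u) :
    ∃ e : ℕ → ℕ → Prop, ∃ σ : (b : ℕ) → b < N → Fin N,
      (∀ b c hb hc, σ b hb = σ c hc → b = c) ∧
      (∀ b c hb hc, e b c → T (σ b hb) (σ c hc)) ∧
      ∀ a c, a ≤ c → c < N → c - a ≤ 2 * ((Finset.Ico a c).filter (fun b => e b c)).card := by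
  obtain ⟨l, hl, h⟩ := median_list T hT (List.finRange N) (List.nodup_finRange N)
  have hlen : l.length = N := by rw [hl.length_eq]; simp
  have hnd : l.Nodup := hl.nodup_iff.2 (List.nodup_finRange N)
  refine ⟨fun b c => ∀ (hb : b < l.length) (hc : c < l.length), T l[b] l[c],
    fun b hb => l[b]'(by omega), ?_, ?_, ?_⟩
  · intro b c hb hc h
    exact (hnd.getElem_inj_iff).1 h
  · intro b c hb hc h
    exact h _ _
  · intro a c hac hc
    have hc' : c < l.length := by omega
    have := h (l.take a) ((l.take c).drop a) (l.drop (c+1)) (l[c]) (by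
      rw [List.getElem_cons_drop, ← List.append_assoc]
      have : l.take a ++ (l.take c).drop a = l.take c := by
        have := List.take_append_drop a (l.take c)
        rwa [List.take_take, min_eq_left hac] at this
      rw [this, List.take_append_drop])
    have e1 : (l.take c).drop a = (List.range' a (c - a)).map (fun b => l.getD b l[c]) := by
      apply List.ext_getElem
      · simp; omega
      · intro i h1 h2
        simp at h1 h2 ⊢
        rw [List.getElem?_eq_getElem (by omega)]; simp
    rw [e1, List.countP_map, List.length_map, List.length_range'] at this
    refine this.trans (Nat.mul_le_mul_left 2 (le_of_eq ?_))
    have e2 : ((Finset.Ico a c).filter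
        (fun b => ∀ (hb : b < l.length) (hc : c < l.length), T l[b] l[c])).card
        = (List.range' a (c-a)).countP
          (fun b => decide (∀ (hb : b < l.length) (hc : c < l.length), T l[b] l[c])) := by
      rw [List.countP_eq_length_filter]; rfl
    trans; swap
    · convert e2.symm
    rw [e2]
    apply List.countP_congr
    intro b hb
    simp only [List.mem_range'_1] at hb
    have hb' : b < l.length := by omega
    simp [hb', hc']


/-- Greedy embedding of one level. -/
theorem greedy_level {V : Type} [DecidableEq V] (X : Finset V) (Y : Finset V) (P : V → Finset V)
    (A : Finset ℕ) (cand : V → Finset ℕ) (c : ℕ → Finset ℕ → ℕ) (Δ p : ℕ) (h M : ℝ)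
    (hh : 0 < h) (hcand : ∀ w ∈ X, cand w ⊆ A) (hcard : ∀ w ∈ X, M ≤ (cand w).card)
    (hM : (X.card : ℝ) + p * h ≤ M)
    (hc : ∀ j S, ∑ v ∈ A, c j (insert v S) ≤ c (j+1) S)
    (hc0 : (c Δ ∅ : ℝ) < h ^ Δ)
    (hP : ∀ y ∈ Y, (P y).card ≤ Δ)
    (hp : ∀ w ∈ X, (Y.filter (fun y => w ∈ P y)).card ≤ p) :
    ∃ φ : V → ℕ, Set.InjOn φ X ∧ (∀ w ∈ X, φ w ∈ cand w) ∧
      ∀ y ∈ Y, (c (Δ - (P y ∩ X).card) ((P y ∩ X).image φ) : ℝ) < h ^ (Δ - (P y ∩ X).card) := by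
  suffices H : ∀ X' : Finset V, X' ⊆ X → ∃ φ : V → ℕ, Set.InjOn φ X' ∧ (∀ w ∈ X', φ w ∈ cand w) ∧
      ∀ y ∈ Y, (c (Δ - (P y ∩ X').card) ((P y ∩ X').image φ) : ℝ) < h ^ (Δ - (P y ∩ X').card) from
    H X (Finset.Subset.refl _)
  intro X'
  induction X' using Finset.induction_on with
  | empty =>
    intro _
    exact ⟨fun _ => 0, by simp, by simp, by simpa using fun _ _ => hc0⟩
  | insert x X' hx ih =>
    intro hsub
    obtain ⟨φ, hinj, hmem, hgood⟩ := ih (fun w hw => hsub (Finset.mem_insert_of_mem hw))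
    have hxX : x ∈ X := hsub (Finset.mem_insert_self _ _)
    let bad : V → Finset ℕ := fun y => A.filter (fun v =>
      h ^ (Δ - (P y ∩ X').card - 1) ≤ (c (Δ - (P y ∩ X').card - 1) (insert v ((P y ∩ X').image φ)) : ℝ))
    have hlt : ∀ y ∈ Y, x ∈ P y → (P y ∩ X').card + 1 ≤ Δ := by
      intro y hy hxy
      refine le_trans ?_ (hP y hy)
      rw [← Finset.card_insert_of_notMem (s := P y ∩ X') (a := x) (by simp [hx])]
      apply Finset.card_le_card
      intro z hz
      rcases Finset.mem_insert.1 hz with rfl | hz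
      · exact hxy
      · exact (Finset.mem_inter.1 hz).1
    have hbad : ∀ y ∈ Y, x ∈ P y → ((bad y).card : ℝ) ≤ h := by
      intro y hy hxy
      have h1 := hlt y hy hxy
      obtain ⟨j, hj⟩ : ∃ j, Δ - (P y ∩ X').card = j + 1 := ⟨Δ - (P y ∩ X').card - 1, by omega⟩
      have h2 := hgood y hy
      rw [hj] at h2
      have h3 : ((bad y).card : ℝ) * h ^ j ≤ h * h ^ j := by
        calc ((bad y).card : ℝ) * h ^ j = ∑ v ∈ bad y, h ^ j := by simp
          _ ≤ ∑ v ∈ bad y, (c j (insert v ((P y ∩ X').image φ)) : ℝ) := by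
            apply Finset.sum_le_sum
            intro v hv
            have := (Finset.mem_filter.1 hv).2
            rw [hj] at this
            exact this
          _ ≤ ∑ v ∈ A, (c j (insert v ((P y ∩ X').image φ)) : ℝ) :=
            Finset.sum_le_sum_of_subset_of_nonneg (Finset.filter_subset _ _) (by intros; positivity)
          _ ≤ (c (j+1) ((P y ∩ X').image φ) : ℝ) := by exact_mod_cast hc j _
          _ ≤ h ^ (j+1) := h2.le
          _ = h * h ^ j := by ring
      exact le_of_mul_le_mul_right h3 (by positivity)
    let F : Finset ℕ := X'.image φ ∪ (Y.filter (fun y => x ∈ P y)).biUnion bad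
    have hF : (F.card : ℝ) < (cand x).card := by
      have h1 : (F.card : ℝ) ≤ X'.card + p * h := by
        calc (F.card : ℝ) ≤ (X'.image φ).card + ((Y.filter (fun y => x ∈ P y)).biUnion bad).card := by
              exact_mod_cast Finset.card_union_le _ _
          _ ≤ X'.card + ∑ y ∈ Y.filter (fun y => x ∈ P y), ((bad y).card : ℝ) := by
              have a1 : (X'.image φ).card ≤ X'.card := Finset.card_image_le
              have a2 : ((Y.filter (fun y => x ∈ P y)).biUnion bad).card ≤
                ∑ y ∈ Y.filter (fun y => x ∈ P y), (bad y).card := Finset.card_biUnion_le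
              exact_mod_cast add_le_add a1 a2
          _ ≤ X'.card + ∑ y ∈ Y.filter (fun y => x ∈ P y), h := by
              gcongr with y hy
              exact hbad y (Finset.mem_filter.1 hy).1 (Finset.mem_filter.1 hy).2
          _ ≤ X'.card + p * h := by
              rw [Finset.sum_const, nsmul_eq_mul]
              have := hp x hxX
              gcongr
      have h2 : (X'.card : ℝ) + 1 ≤ X.card := by
        have := Finset.card_le_card hsub
        rw [Finset.card_insert_of_notMem hx] at this
        exact_mod_cast this
      have := hcard x hxX
      linarith
    obtain ⟨v, hv, hvF⟩ : ∃ v ∈ cand x, v ∉ F := by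
      by_contra! hcon
      have : (cand x).card ≤ F.card := Finset.card_le_card hcon
      have : ((cand x).card : ℝ) ≤ F.card := by exact_mod_cast this
      linarith
    simp only [F, Finset.mem_union, not_or, Finset.mem_biUnion, not_exists, not_and] at hvF
    have himg : ∀ S : Finset V, S ⊆ X' → S.image (Function.update φ x v) = S.image φ := by
      intro S hS
      apply Finset.image_congr
      intro w hw
      have : w ≠ x := fun e => hx (e ▸ hS hw)
      simp [Function.update_of_ne this]
    refine ⟨Function.update φ x v, ?_, ?_, ?_⟩
    · rw [Finset.coe_insert, Set.injOn_insert (by simpa using hx)]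
      constructor
      · intro a ha b hb hab
        have h1 : a ≠ x := fun e => hx (e ▸ ha)
        have h2 : b ≠ x := fun e => hx (e ▸ hb)
        rw [Function.update_of_ne h1, Function.update_of_ne h2] at hab
        exact hinj ha hb hab
      · rw [Function.update_self]
        rintro ⟨w, hw, hwv⟩
        have h1 : w ≠ x := fun e => hx (e ▸ hw)
        rw [Function.update_of_ne h1] at hwv
        exact hvF.1 (Finset.mem_image.2 ⟨w, hw, hwv⟩)
    · intro w hw
      rcases Finset.mem_insert.1 hw with rfl | hw
      · rwa [Function.update_self]
      · have h1 : w ≠ x := fun e => hx (e ▸ hw)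
        rw [Function.update_of_ne h1]
        exact hmem w hw
    · intro y hy
      by_cases hxy : x ∈ P y
      · have e1 : P y ∩ insert x X' = insert x (P y ∩ X') := by
          rw [Finset.inter_insert_of_mem hxy]
        rw [e1, Finset.card_insert_of_notMem (by simp [hx]), Finset.image_insert,
          Function.update_self, himg _ Finset.inter_subset_right, ← Nat.sub_sub]
        have := hvF.2 y (by simp [hy, hxy])
        simp only [bad, Finset.mem_filter, not_and, not_le] at this
        exact this (hcand x hxX hv)
      · rw [Finset.inter_insert_of_notMem hxy, himg _ Finset.inter_subset_right]
        exact hgood y hy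


theorem power_mean {ι : Type*} (S : Finset ι) (hS : S.Nonempty) (f : ι → ℝ) (hf : ∀ i ∈ S, 0 ≤ f i)
    (y : ℝ) (hy : 0 ≤ y) (h : S.card * y ≤ ∑ i ∈ S, f i) (k : ℕ) :
    S.card * y ^ k ≤ ∑ i ∈ S, f i ^ k := by
  have hpos : (0:ℝ) < S.card := by exact_mod_cast hS.card_pos
  have := Real.pow_arith_mean_le_arith_mean_pow S (fun _ => (S.card : ℝ)⁻¹) f
    (fun _ _ => by positivity) (by rw [Finset.sum_const, nsmul_eq_mul]; field_simp) hf k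
  rw [← Finset.mul_sum, ← Finset.mul_sum] at this
  have h1 : y ≤ (S.card : ℝ)⁻¹ * ∑ i ∈ S, f i := by
    rw [inv_mul_eq_div, le_div_iff₀ hpos]; linarith
  have h2 : y ^ k ≤ (S.card : ℝ)⁻¹ * ∑ i ∈ S, f i ^ k := (pow_le_pow_left₀ hy h1 k).trans this
  rw [inv_mul_eq_div, le_div_iff₀ hpos] at h2
  linarith

open Classical in
/-- Dependent random choice. -/
theorem drc (R : ℕ → ℕ → Prop) (U B : Finset ℕ) (Δ : ℕ) (hΔ : 1 ≤ Δ) (d q x η : ℝ)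
    (hd : 0 < d) (hq : 0 < q) (hqd : q ≤ d ^ (2 * Δ)) (hx : 0 ≤ x) (hη : 0 < η)
    (hxη : 2 * x ^ 2 ≤ η * q)
    (hU : U.Nonempty) (hB : B.Nonempty)
    (hden : d * U.card * B.card ≤ ∑ u ∈ U, ((B.filter (fun b => R u b)).card : ℝ)) :
    ∃ A ⊆ U, q * U.card / 2 ≤ A.card ∧
      ((((Fintype.piFinset (fun _ : Fin Δ => A)).filter (fun t =>
        ((B.filter (fun b => ∀ i, R (t i) b)).card : ℝ) < x * B.card)).card : ℕ) : ℝ)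
        < (η * A.card) ^ Δ := by
  set s := 2 * Δ with hs
  have hBpos : (0:ℝ) < B.card := by exact_mod_cast hB.card_pos
  have hUpos : (0:ℝ) < U.card := by exact_mod_cast hU.card_pos
  set Bs := Fintype.piFinset (fun _ : Fin s => B) with hBs
  have hBscard : (Bs.card : ℝ) = (B.card : ℝ) ^ s := by
    simp [hBs]
  let N : (Fin s → ℕ) → Finset ℕ := fun b => U.filter (fun u => ∀ i, R u (b i))
  let bad : (Fin Δ → ℕ) → Prop := fun t =>
    ((B.filter (fun b => ∀ i, R (t i) b)).card : ℝ) < x * B.card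
  let bc : Finset ℕ → ℕ := fun A => ((Fintype.piFinset (fun _ : Fin Δ => A)).filter bad).card
  -- counting tuples all of whose entries lie in a neighbourhood
  have hcount : ∀ p : ℕ → Prop, ((Bs.filter (fun b => ∀ i, p (b i))).card) =
      (B.filter p).card ^ s := by
    intro p
    have : Bs.filter (fun b => ∀ i, p (b i)) = Fintype.piFinset (fun _ : Fin s => B.filter p) := by
      ext b
      simp [hBs, Fintype.mem_piFinset, forall_and]
    rw [this]; simp
  have hBsne : Bs.Nonempty := by
    rw [hBs, Fintype.piFinset_nonempty]; exact fun _ => hB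
  -- first moment
  have h1 : (Bs.card : ℝ) * (q * U.card) ≤ ∑ b ∈ Bs, ((N b).card : ℝ) := by
    have e : ∑ b ∈ Bs, ((N b).card : ℝ) = ∑ u ∈ U, ((B.filter (fun b => R u b)).card : ℝ) ^ s := by
      have : ∑ b ∈ Bs, (N b).card = ∑ u ∈ U, (B.filter (fun b => R u b)).card ^ s := by
        simp only [N, ← hcount]
        exact Finset.sum_card_bipartiteAbove_eq_sum_card_bipartiteBelow
          (fun (b : Fin s → ℕ) u => ∀ i, R u (b i))
      exact_mod_cast this
    rw [e, hBscard]
    have := power_mean U hU (fun u => ((B.filter (fun b => R u b)).card : ℝ))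
      (fun _ _ => by positivity) (d * B.card) (by positivity) (by linarith) s
    refine le_trans ?_ this
    rw [mul_pow]
    have h0 : (0:ℝ) ≤ (B.card : ℝ) ^ s * U.card := by positivity
    nlinarith [mul_le_mul_of_nonneg_left hqd h0]
  -- power mean
  have h2 : (Bs.card : ℝ) * (q * U.card) ^ Δ ≤ ∑ b ∈ Bs, ((N b).card : ℝ) ^ Δ :=
    power_mean Bs hBsne _ (fun _ _ => by positivity) _ (by positivity) h1 Δ
  have h3 : ∑ b ∈ Bs, (bc (N b) : ℝ) ≤ (U.card : ℝ) ^ Δ * (x * B.card) ^ s := by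
    have e : ∑ b ∈ Bs, bc (N b) = ∑ t ∈ (Fintype.piFinset (fun _ : Fin Δ => U)).filter bad,
        (B.filter (fun b => ∀ i, R (t i) b)).card ^ s := by
      have e1 : ∀ b, bc (N b) = (((Fintype.piFinset (fun _ : Fin Δ => U)).filter bad).filter
          (fun t => ∀ j, ∀ i, R (t i) (b j))).card := by
        intro b
        simp only [bc, N]
        congr 1
        ext t
        simp only [Finset.mem_filter, Fintype.mem_piFinset]
        constructor
        · rintro ⟨h, h'⟩
          exact ⟨⟨fun i => (h i).1, h'⟩, fun j i => (h i).2 j⟩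
        · rintro ⟨⟨h, h'⟩, h''⟩
          exact ⟨fun i => ⟨h i, fun j => h'' j i⟩, h'⟩
      simp only [e1]
      have e2 : ∀ t : Fin Δ → ℕ, (B.filter (fun b => ∀ i, R (t i) b)).card ^ s =
        (Bs.filter (fun b => ∀ j, ∀ i, R (t i) (b j))).card := by
        intro t
        convert (hcount (fun b => ∀ i, R (t i) b)).symm
      simp only [e2]
      exact Finset.sum_card_bipartiteAbove_eq_sum_card_bipartiteBelow
        (fun (b : Fin s → ℕ) (t : Fin Δ → ℕ) => ∀ j, ∀ i, R (t i) (b j))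
    have e' : ∑ b ∈ Bs, (bc (N b) : ℝ) = ∑ t ∈ (Fintype.piFinset (fun _ : Fin Δ => U)).filter bad,
        ((B.filter (fun b => ∀ i, R (t i) b)).card : ℝ) ^ s := by exact_mod_cast e
    rw [e']
    calc _ ≤ ∑ t ∈ (Fintype.piFinset (fun _ : Fin Δ => U)).filter bad, (x * B.card) ^ s := by
          apply Finset.sum_le_sum
          intro t ht
          have : ((B.filter (fun b => ∀ i, R (t i) b)).card : ℝ) < x * B.card :=
            (Finset.mem_filter.1 ht).2
          gcongr
      _ ≤ (U.card : ℝ) ^ Δ * (x * B.card) ^ s := by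
          rw [Finset.sum_const, nsmul_eq_mul]
          gcongr
          have := Finset.card_filter_le (Fintype.piFinset (fun _ : Fin Δ => U)) bad
          rw [Fintype.card_piFinset] at this
          simp at this
          exact_mod_cast this
  -- choose a good tuple
  have h4 : ∑ b ∈ Bs, (q * U.card) ^ Δ / 2 ≤
      ∑ b ∈ Bs, (((N b).card : ℝ) ^ Δ - bc (N b) / η ^ Δ) := by
    rw [Finset.sum_sub_distrib, ← Finset.sum_div Bs (fun b => (bc (N b) : ℝ)), Finset.sum_const, nsmul_eq_mul]
    have h5 : (∑ b ∈ Bs, (bc (N b) : ℝ)) / η ^ Δ ≤ (Bs.card : ℝ) * ((q * U.card) ^ Δ / 2) := by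
      rw [div_le_iff₀ (by positivity)]
      refine h3.trans ?_
      rw [hBscard, mul_pow, mul_pow]
      have h6 : 2 * x ^ s ≤ η ^ Δ * q ^ Δ := by
        rw [← mul_pow, hs, pow_mul]
        calc 2 * (x ^ 2) ^ Δ ≤ 2 ^ Δ * (x ^ 2) ^ Δ := by
              gcongr
              exact le_self_pow₀ (by norm_num) (by omega)
          _ = (2 * x ^ 2) ^ Δ := by rw [mul_pow]
          _ ≤ _ := by gcongr
      have h7 : (0:ℝ) ≤ (U.card : ℝ) ^ Δ * (B.card : ℝ) ^ s := by positivity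
      nlinarith [mul_le_mul_of_nonneg_left h6 h7]
    linarith
  obtain ⟨b, hb, hbb⟩ := Finset.exists_le_of_sum_le hBsne h4
  have hpos : (0:ℝ) < (q * U.card) ^ Δ / 2 := by positivity
  refine ⟨N b, Finset.filter_subset _ _, ?_, ?_⟩
  · have h8 : (q * U.card) ^ Δ / 2 ≤ ((N b).card : ℝ) ^ Δ := by
      have : (0:ℝ) ≤ bc (N b) / η ^ Δ := by positivity
      linarith
    have h9 : (q * U.card / 2) ^ Δ ≤ ((N b).card : ℝ) ^ Δ := by
      refine le_trans ?_ h8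
      rw [div_pow]
      gcongr
      exact le_self_pow₀ (by norm_num) (by omega)
    exact le_of_pow_le_pow_left₀ (by omega) (by positivity) h9
  · have : (bc (N b) : ℝ) / η ^ Δ < ((N b).card : ℝ) ^ Δ := by linarith
    rw [div_lt_iff₀ (by positivity)] at this
    rw [mul_pow, mul_comm (η ^ Δ)]
    exact this


open Classical in
noncomputable def gcnt (R : ℕ → ℕ → Prop) (B A : Finset ℕ) (x : ℝ) (j : ℕ) (S : Finset ℕ) : ℕ :=
  ((Fintype.piFinset (fun _ : Fin j => A)).filter (fun t =>
    ((B.filter (fun b => (∀ z ∈ S, R z b) ∧ ∀ i, R (t i) b)).card : ℝ) < x * B.card)).card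

theorem gcnt_sum (R : ℕ → ℕ → Prop) (B A : Finset ℕ) (x : ℝ) (j : ℕ) (S : Finset ℕ) :
    ∑ v ∈ A, gcnt R B A x j (insert v S) ≤ gcnt R B A x (j+1) S := by
  classical
  unfold gcnt
  rw [Finset.card_eq_sum_card_fiberwise (f := fun t : Fin (j+1) → ℕ => t 0) (t := A)]
  · apply Finset.sum_le_sum
    intro v hv
    apply Finset.card_le_card_of_injOn (fun t => (Fin.cons v t : Fin (j+1) → ℕ))
    · intro t ht
      simp only [Finset.coe_filter, Set.mem_ofPred_eq, Fintype.mem_piFinset, Finset.mem_filter] at ht ⊢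
      refine ⟨⟨?_, ?_⟩, by simp⟩
      · intro i
        refine Fin.cases ?_ (fun i => ?_) i
        · simpa using hv
        · simpa using ht.1 i
      · refine lt_of_le_of_lt ?_ ht.2
        have : (B.filter (fun b => (∀ z ∈ S, R z b) ∧
            ∀ i, R ((Fin.cons v t : Fin (j+1) → ℕ) i) b)).card ≤
            (B.filter (fun b => (∀ z ∈ insert v S, R z b) ∧ ∀ i, R (t i) b)).card := by
          apply Finset.card_le_card
          intro b hb
          simp only [Finset.mem_filter, Finset.mem_insert, forall_eq_or_imp] at hb ⊢
          refine ⟨hb.1, ⟨by simpa using hb.2.2 0, hb.2.1⟩, fun i => by simpa using hb.2.2 i.succ⟩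
        exact_mod_cast this
    · intro t _ t' _ h
      exact Fin.cons_right_injective (α := fun _ => ℕ) v h
  · intro t ht
    simp only [Finset.coe_filter, Set.mem_ofPred_eq, Fintype.mem_piFinset] at ht
    exact ht.1 0

open Classical in
theorem gcnt_use (R : ℕ → ℕ → Prop) (B A : Finset ℕ) (x : ℝ) (j : ℕ) (S : Finset ℕ)
    (h : (gcnt R B A x j S : ℝ) < (A.card : ℝ) ^ j) :
    x * B.card ≤ ((B.filter (fun b => ∀ z ∈ S, R z b)).card : ℝ) := by
  by_contra! hcon
  have : gcnt R B A x j S = A.card ^ j := by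
    unfold gcnt
    rw [Finset.filter_true_of_mem]
    · simp
    · intro t _
      refine lt_of_le_of_lt ?_ hcon
      have : (B.filter (fun b => (∀ z ∈ S, R z b) ∧ ∀ i, R (t i) b)).card ≤
          (B.filter (fun b => ∀ z ∈ S, R z b)).card := by
        apply Finset.card_le_card
        intro b hb
        simp only [Finset.mem_filter] at hb ⊢
        exact ⟨hb.1, hb.2.1⟩
      exact_mod_cast this
  rw [this] at h
  push_cast at h
  exact lt_irrefl _ h

open Classical in
/-- Common out-neighbours of `S` in `B`. -/
noncomputable def gcnb (R : ℕ → ℕ → Prop) (B S : Finset ℕ) : Finset ℕ :=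
  B.filter (fun b => ∀ z ∈ S, R z b)

theorem mem_gcnb {R : ℕ → ℕ → Prop} {B S : Finset ℕ} {b : ℕ} :
    b ∈ gcnb R B S ↔ b ∈ B ∧ ∀ z ∈ S, R z b := by
  simp [gcnb]

theorem gcnt_use' (R : ℕ → ℕ → Prop) (B A : Finset ℕ) (x : ℝ) (j : ℕ) (S : Finset ℕ)
    (h : (gcnt R B A x j S : ℝ) < (A.card : ℝ) ^ j) :
    x * B.card ≤ ((gcnb R B S).card : ℝ) := by
  classical
  have := gcnt_use R B A x j S h
  unfold gcnb
  convert this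

theorem sum_blocks (f : ℕ → ℝ) (c m k : ℕ) :
    ∑ j ∈ Finset.range k, ∑ u ∈ Finset.Ico (c + j * m) (c + j * m + m), f u =
      ∑ u ∈ Finset.Ico c (c + k * m), f u := by
  induction k with
  | zero => simp
  | succ k ih =>
    rw [Finset.sum_range_succ, ih, Finset.sum_Ico_consecutive _ (by omega) (by omega)]
    congr 2
    ring

open Classical in
theorem window (R : ℕ → ℕ → Prop) (N : ℕ)
    (hmed : ∀ a c, a ≤ c → c < N → c - a ≤ 2 * ((Finset.Ico a c).filter (fun b => R b c)).card)
    (a m m' k D : ℕ) (hk : 1 ≤ k) (hD : 1 ≤ D) (hLa : k * m' ≤ a) (hN : a + m ≤ N)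
    (hL : D * m ≤ k * m') (B : Finset ℕ) (hB : B ⊆ Finset.Ico a (a + m)) :
    ∃ a', a ≤ a' + k * m' ∧ a' + m' ≤ a ∧
      ((1 - 1 / (D:ℝ)) / 2) * m' * B.card ≤
        ∑ u ∈ Finset.Ico a' (a' + m'), ((B.filter (fun b => R u b)).card : ℝ) := by
  obtain ⟨c, rfl⟩ : ∃ c, a = c + k * m' := ⟨a - k * m', by omega⟩
  have hDpos : (0:ℝ) < D := by exact_mod_cast hD
  have hkpos : (0:ℝ) < k := by exact_mod_cast hk
  have h1 : ∀ b ∈ B, ((k * m' : ℝ) - m) / 2 ≤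
      (((Finset.Ico c (c + k * m')).filter (fun u => R u b)).card : ℝ) := by
    intro b hb
    have hb' := Finset.mem_Ico.1 (hB hb)
    have h := hmed c b (by omega) (by omega)
    have h2 : ((Finset.Ico c b).filter (fun u => R u b)).card ≤
        ((Finset.Ico c (c + k * m')).filter (fun u => R u b)).card + (b - (c + k * m')) := by
      rw [← Finset.Ico_union_Ico_eq_Ico (b := c + k * m') (by omega) hb'.1, Finset.filter_union]
      refine (Finset.card_union_le _ _).trans (Nat.add_le_add_left ?_ _)
      refine (Finset.card_filter_le _ _).trans ?_
      simp
    have h3 : k * m' ≤ 2 * ((Finset.Ico c (c + k * m')).filter (fun u => R u b)).card + m := by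
      omega
    have h4 : (k * m' : ℝ) ≤ 2 * ((Finset.Ico c (c + k * m')).filter (fun u => R u b)).card + m := by
      exact_mod_cast h3
    linarith
  have h2 : (B.card : ℝ) * (((k * m' : ℝ) - m) / 2) ≤
      ∑ u ∈ Finset.Ico c (c + k * m'), ((B.filter (fun b => R u b)).card : ℝ) := by
    have e : ∑ u ∈ Finset.Ico c (c + k * m'), (B.filter (fun b => R u b)).card =
        ∑ b ∈ B, ((Finset.Ico c (c + k * m')).filter (fun u => R u b)).card :=
      Finset.sum_card_bipartiteAbove_eq_sum_card_bipartiteBelow R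
    have e' : ∑ u ∈ Finset.Ico c (c + k * m'), ((B.filter (fun b => R u b)).card : ℝ) =
        ∑ b ∈ B, (((Finset.Ico c (c + k * m')).filter (fun u => R u b)).card : ℝ) := by
      exact_mod_cast e
    rw [e', ← nsmul_eq_mul, ← Finset.sum_const]
    exact Finset.sum_le_sum h1
  rw [← sum_blocks] at h2
  have h3 : ∑ j ∈ Finset.range k, ((1 - 1 / (D:ℝ)) / 2) * m' * B.card ≤
      ∑ j ∈ Finset.range k, ∑ u ∈ Finset.Ico (c + j * m') (c + j * m' + m'),
        ((B.filter (fun b => R u b)).card : ℝ) := by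
    refine le_trans ?_ h2
    rw [Finset.sum_const, Finset.card_range, nsmul_eq_mul]
    have h4 : (D:ℝ) * m ≤ k * m' := by exact_mod_cast hL
    have h5 : (m:ℝ) ≤ k * m' * (1 / D) := by
      rw [mul_one_div, le_div_iff₀ hDpos]; linarith
    have h6 : (0:ℝ) ≤ B.card := by positivity
    nlinarith [mul_le_mul_of_nonneg_left h5 h6]
  obtain ⟨j, hj, hjj⟩ := Finset.exists_le_of_sum_le (by simp; omega) h3
  have hj := Finset.mem_range.1 hj
  have : (j + 1) * m' ≤ k * m' := Nat.mul_le_mul_right _ hj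
  refine ⟨c + j * m', by omega, by rw [add_mul] at this; omega, hjj⟩


theorem dens_bound (Δ : ℕ) (hΔ : 1 ≤ Δ) :
    (3/4 : ℝ) / 4 ^ Δ ≤ ((1 - 1 / ((8 * Δ : ℕ) : ℝ)) / 2) ^ (2 * Δ) := by
  have hpos : (1:ℝ) ≤ Δ := by exact_mod_cast hΔ
  have hb := one_add_mul_le_pow (a := -(1 / ((8 * Δ : ℕ) : ℝ))) (by
    push_cast
    have : 1 / (8 * (Δ:ℝ)) ≤ 1 := by
      rw [div_le_one (by positivity)]; linarith
    linarith) (2 * Δ)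
  have e : (1:ℝ) + ((2 * Δ : ℕ) : ℝ) * -(1 / ((8 * Δ : ℕ) : ℝ)) = 3/4 := by
    push_cast
    field_simp
    norm_num
  rw [e, ← sub_eq_add_neg] at hb
  rw [div_pow, pow_mul 2 2 Δ]
  norm_num only at hb ⊢
  gcongr

/-- The inductive embedding property. -/
def EmbProp {V : Type} (R : ℕ → ℕ → Prop) (E : V → V → Prop) (g : V → ℕ) (N : ℕ) (x : ℝ)
    (i a : ℕ) (A : Finset ℕ) : Prop :=
  ∀ cand : V → Finset ℕ, (∀ w, g w = i → cand w ⊆ A ∧ x * A.card ≤ (cand w).card) →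
    ∃ φ : V → ℕ, Set.InjOn φ {w | i ≤ g w} ∧ (∀ w, i ≤ g w → a ≤ φ w ∧ φ w < N) ∧
      (∀ w, g w = i → φ w ∈ cand w) ∧ ∀ u v, i ≤ g u → E u v → R (φ u) (φ v)

open Classical in
theorem core_step {V : Type} [Fintype V] (R : ℕ → ℕ → Prop) (E : V → V → Prop)
    (g : V → ℕ) (N Δ p : ℕ) (hΔ : 1 ≤ Δ) (hp : 1 ≤ p)
    (hg : ∀ u v, E u v → g v = g u + 1)
    (hin : ∀ v, (Finset.univ.filter (fun u => E u v)).card ≤ Δ)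
    (hout : ∀ v, (Finset.univ.filter (fun u => E v u)).card ≤ p)
    (q x η : ℝ) (hq : q = (3/4) / 4 ^ Δ) (hx : x = q / (8 * p)) (hη : η = q / (32 * p ^ 2))
    (i a a₁ m ni : ℕ) (hni : ni = (Finset.univ.filter (fun v => g v = i)).card) (hni1 : 1 ≤ ni)
    (B A : Finset ℕ) (hm : a + m ≤ a₁) (hA : A ⊆ Finset.Ico a (a + m)) (haN : a₁ ≤ N)
    (hmi : m = 64 * p * 16 ^ Δ * ni)
    (hAcard : q * m / 2 ≤ A.card)
    (hcnt : (gcnt R B A x Δ ∅ : ℝ) < (η * A.card) ^ Δ)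
    (hB : EmbProp R E g N x (i+1) a₁ B) : EmbProp R E g N x i a A := by
  intro cand hcand
  have hp' : (1:ℝ) ≤ p := by exact_mod_cast hp
  have hqpos : 0 < q := by rw [hq]; positivity
  have hq1 : q ≤ 1 := by
    rw [hq, div_le_one (by positivity)]
    have : (1:ℝ) ≤ 4 ^ Δ := one_le_pow₀ (by norm_num)
    linarith
  have hη0 : 0 < η := by rw [hη]; positivity
  have hη1 : η ≤ 1 := by
    rw [hη, div_le_one (by positivity)]
    nlinarith
  have hniR : (1:ℝ) ≤ ni := by exact_mod_cast hni1
  have hmR : (m:ℝ) = 64 * p * 16 ^ Δ * ni := by rw [hmi]; push_cast; ring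
  have hmpos : (0:ℝ) < m := by rw [hmR]; positivity
  have hApos : (0:ℝ) < A.card := lt_of_lt_of_le (by positivity) hAcard
  have hpη : p * η = x / 4 := by
    rw [hη, hx]; field_simp; norm_num
  have hxA : (ni : ℝ) ≤ 3 / 4 * (x * A.card) := by
    have hxpos : 0 < x := by rw [hx]; positivity
    have h1 : x * (q * m / 2) ≤ x * A.card := mul_le_mul_of_nonneg_left hAcard hxpos.le
    have h2 : x * (q * m / 2) = 9 / 4 * ni := by
      rw [hx, hmR, hq]
      have : (16:ℝ) ^ Δ = 4 ^ Δ * 4 ^ Δ := by rw [← mul_pow]; norm_num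
      rw [this]
      field_simp
      norm_num
    linarith
  obtain ⟨φ₁, hinj, hmem, hgood⟩ := greedy_level (Finset.univ.filter (fun v => g v = i))
    (Finset.univ.filter (fun v => g v = i + 1)) (fun y => Finset.univ.filter (fun u => E u y))
    A cand (gcnt R B A x) Δ p (η * A.card) (x * A.card) (by positivity)
    (fun w hw => (hcand w (by simpa using hw)).1) (fun w hw => (hcand w (by simpa using hw)).2)
    (by rw [← hni, ← mul_assoc, hpη]; linarith) (gcnt_sum R B A x) hcnt
    (fun y _ => hin y)
    (by
      intro w _
      refine le_trans (Finset.card_le_card ?_) (hout w)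
      intro y hy
      simp at hy ⊢
      exact hy.2)
  obtain ⟨φ₂, hinj2, hbd2, hmem2, hadj2⟩ := hB
    (fun y => gcnb R B ((Finset.univ.filter (fun u => E u y)).image φ₁)) (by
      intro y hy
      refine ⟨fun b hb => (mem_gcnb.1 hb).1, ?_⟩
      have h := hgood y (by simpa using hy)
      have e : (Finset.univ.filter (fun u => E u y)) ∩ (Finset.univ.filter (fun v => g v = i)) =
          Finset.univ.filter (fun u => E u y) := by
        apply Finset.inter_eq_left.2
        intro u hu
        simp at hu ⊢
        have := hg u y hu
        omega
      rw [e] at h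
      exact gcnt_use' R B A x _ _ (lt_of_lt_of_le h
        (pow_le_pow_left₀ (by positivity) (by nlinarith) _)))
  have hφ₁ : ∀ w, g w = i → a ≤ φ₁ w ∧ φ₁ w < a₁ := by
    intro w hw
    have := Finset.mem_Ico.1 (hA ((hcand w hw).1 (hmem w (by simpa using hw))))
    omega
  refine ⟨fun w => if g w = i then φ₁ w else φ₂ w, ?_, ?_, ?_, ?_⟩
  · intro u hu v hv huv
    have hu : i ≤ g u := hu
    have hv : i ≤ g v := hv
    by_cases h1 : g u = i <;> by_cases h2 : g v = i <;> simp only [h1, h2, if_true, if_false] at huv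
    · exact hinj (by simpa using h1) (by simpa using h2) huv
    · have a1 := hφ₁ u h1
      have a2 := hbd2 v (by omega)
      omega
    · have a1 := hφ₁ v h2
      have a2 := hbd2 u (by omega)
      omega
    · exact hinj2 (show i + 1 ≤ g u by omega) (show i + 1 ≤ g v by omega) huv
  · intro w hw
    by_cases h1 : g w = i <;> simp only [h1, if_true, if_false]
    · have := hφ₁ w h1
      omega
    · have := hbd2 w (by omega)
      omega
  · intro w hw
    simp only [hw, if_true]
    exact hmem w (by simpa using hw)
  · intro u v hu huv
    have hgv := hg u v huv
    have h2 : ¬ g v = i := by omega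
    by_cases h1 : g u = i <;> simp only [h1, h2, if_true, if_false]
    · have := (mem_gcnb.1 (hmem2 v (by omega))).2
      exact this _ (Finset.mem_image.2 ⟨u, by simpa using huv, rfl⟩)
    · exact hadj2 u v (by omega) huv

open Classical in
theorem core {V : Type} [Fintype V] (R : ℕ → ℕ → Prop) (E : V → V → Prop)
    (g : V → ℕ) (N Δ p H : ℕ) (hΔ : 1 ≤ Δ) (hp : 1 ≤ p)
    (hmed : ∀ a c, a ≤ c → c < N → c - a ≤ 2 * ((Finset.Ico a c).filter (fun b => R b c)).card)
    (hg : ∀ u v, E u v → g v = g u + 1)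
    (hlev : ∀ i < H, ∃ v, g v = i) (hH : ∀ v, g v < H) (hHpos : 0 < H)
    (hin : ∀ v, (Finset.univ.filter (fun u => E u v)).card ≤ Δ)
    (hout : ∀ v, (Finset.univ.filter (fun u => E v u)).card ≤ p)
    (hN : (8 * Δ + 1) * (64 * p * 16 ^ Δ) * Fintype.card V ≤ N) :
    ∃ φ : V → ℕ, Function.Injective φ ∧ (∀ w, φ w < N) ∧ ∀ u v, E u v → R (φ u) (φ v) := by
  obtain ⟨C, hC⟩ : ∃ C, C = 64 * p * 16 ^ Δ := ⟨_, rfl⟩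
  rw [← hC] at hN
  let lv : ℕ → ℕ := fun i => (Finset.univ.filter (fun v => g v = i)).card
  let up : ℕ → ℕ := fun i => (Finset.univ.filter (fun v => i ≤ g v)).card
  have hup : ∀ i j, j = i + 1 → up i = lv i + up j := by
    rintro i _ rfl
    simp only [up, lv]
    rw [← Finset.card_union_of_disjoint]
    · congr 1
      ext v
      simp
      omega
    · rw [Finset.disjoint_filter]
      intros; omega
  have hup0 : ∀ i, up i ≤ Fintype.card V := fun i => Finset.card_le_univ _
  have hlv : ∀ i < H, 1 ≤ lv i := by
    intro i hi
    obtain ⟨v, hv⟩ := hlev i hi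
    exact Finset.card_pos.2 ⟨v, by simpa using hv⟩
  obtain ⟨q, hq⟩ : ∃ q : ℝ, q = (3/4) / 4 ^ Δ := ⟨_, rfl⟩
  obtain ⟨x, hx⟩ : ∃ x : ℝ, x = q / (8 * p) := ⟨_, rfl⟩
  obtain ⟨η, hη⟩ : ∃ η : ℝ, η = q / (32 * p ^ 2) := ⟨_, rfl⟩
  have hp' : (1:ℝ) ≤ p := by exact_mod_cast hp
  have hΔ' : (1:ℝ) ≤ Δ := by exact_mod_cast hΔ
  have hqpos : 0 < q := by rw [hq]; positivity
  have hq1 : q ≤ 1 := by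
    rw [hq, div_le_one (by positivity)]
    have : (1:ℝ) ≤ 4 ^ Δ := one_le_pow₀ (by norm_num)
    linarith
  have hη0 : 0 < η := by rw [hη]; positivity
  have hx0 : 0 < x := by rw [hx]; positivity
  have hCpos : 1 ≤ C := by
    have : 0 < C := by rw [hC]; positivity
    omega
  have main : ∀ k i, i + k + 1 = H → ∃ a A, A ⊆ Finset.Ico a (a + C * lv i) ∧
      a + C * lv i ≤ N ∧ N ≤ a + (8 * Δ + 1) * C * up (i+1) + C * lv i ∧
      q * (C * lv i : ℕ) / 2 ≤ A.card ∧ EmbProp R E g N x i a A := by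
    intro k
    induction k with
    | zero =>
      intro i hi
      have hle : C * lv i ≤ N := by
        have h1 : lv i ≤ Fintype.card V := Finset.card_le_univ _
        have h2 : C * lv i ≤ C * Fintype.card V := Nat.mul_le_mul_left _ h1
        nlinarith
      have hcard : q * (C * lv i : ℕ) / 2 ≤ (Finset.Ico (N - C * lv i) N).card := by
        rw [Nat.card_Ico, show N - (N - C * lv i) = C * lv i by omega]
        have : (0:ℝ) ≤ (C * lv i : ℕ) := Nat.cast_nonneg _
        nlinarith
      refine ⟨N - C * lv i, Finset.Ico (N - C * lv i) N, ?_, by omega, by omega, hcard, ?_⟩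
      · rw [Nat.sub_add_cancel hle]
      · refine core_step R E g N Δ p hΔ hp hg hin hout q x η hq hx hη i (N - C * lv i) N
          (C * lv i) (lv i) rfl (hlv i (by omega)) ∅ _ (by omega) (by rw [Nat.sub_add_cancel hle])
          le_rfl (by rw [hC]) hcard ?_ ?_
        · have : gcnt R ∅ (Finset.Ico (N - C * lv i) N) x Δ ∅ = 0 := by
            simp [gcnt]
          rw [this]
          have h3 : (0:ℝ) < (Finset.Ico (N - C * lv i) N).card := by
            refine lt_of_lt_of_le ?_ hcard
            have : 0 < C * lv i := Nat.mul_pos hCpos (hlv i (by omega))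
            have : (0:ℝ) < (C * lv i : ℕ) := by exact_mod_cast this
            exact half_pos (mul_pos hqpos this)
          push_cast
          exact pow_pos (mul_pos hη0 h3) _
        · intro cand _
          refine ⟨fun _ => 0, ?_, ?_, ?_, ?_⟩
          · intro u hu
            have h1 : i + 1 ≤ g u := hu
            have := hH u
            omega
          · intro u hu
            have := hH u
            omega
          · intro u hu
            have := hH u
            omega
          · intro u _ hu
            have := hH u
            omega
    | succ k ih =>
      intro i hi
      obtain ⟨a, B, hB, haN, hNa, hBcard, hE⟩ := ih (i+1) (by omega)
      have hl0 := hlv i (by omega)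
      have hl1 := hlv (i+1) (by omega)
      have hu0 := hup0 i
      have hu1 := hup i _ rfl
      have hu2 := hup (i+1) _ rfl
      have hm'pos : 0 < C * lv i := Nat.mul_pos hCpos hl0
      set m := C * lv (i+1) with hm
      set m' := C * lv i with hm'
      have hdm := Nat.div_add_mod (8 * Δ * m) m'
      have hmod := Nat.mod_lt (8 * Δ * m) hm'pos
      obtain ⟨t, ht⟩ : ∃ t, t = 8 * Δ * m / m' + 1 := ⟨_, rfl⟩
      have ht1 : 8 * Δ * m ≤ t * m' := by
        rw [ht, add_mul, mul_comm (_ / _) m']; omega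
      have ht2 : t * m' ≤ 8 * Δ * m + m' := by
        rw [ht, add_mul, mul_comm (_ / _) m']; omega
      have hta : t * m' ≤ a := by
        have e1 : (8 * Δ + 1) * C * (lv i + (lv (i+1) + up (i+1+1))) ≤ N := by
          refine le_trans (Nat.mul_le_mul_left _ ?_) hN
          omega
        have e2 : (8 * Δ + 1) * C * (lv i + (lv (i+1) + up (i+1+1))) =
          8 * Δ * m' + m' + 8 * Δ * m + m + (8 * Δ + 1) * C * up (i+1+1) := by
          rw [hm, hm']; ring
        omega
      obtain ⟨a', ha1, ha2, hden⟩ := window R N hmed a m m' t (8 * Δ) (by rw [ht]; exact Nat.le_add_left _ _) (by omega) hta haN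
        ht1 B hB
      have hBne : B.Nonempty := by
        rw [← Finset.card_pos]
        have : 0 < m := Nat.mul_pos hCpos hl1
        have : (0:ℝ) < (m : ℕ) := by exact_mod_cast this
        have : (0:ℝ) < B.card := lt_of_lt_of_le (half_pos (mul_pos hqpos this)) hBcard
        exact_mod_cast this
      have hdpos : 0 < (1 - 1 / ((8 * Δ : ℕ) : ℝ)) / 2 := by
        have : 1 / ((8 * Δ : ℕ) : ℝ) < 1 := by
          push_cast
          rw [div_lt_one (by positivity)]; linarith
        linarith
      obtain ⟨A, hAU, hAcard, hbad⟩ := drc R (Finset.Ico a' (a' + m')) B Δ hΔ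
        ((1 - 1 / ((8 * Δ : ℕ) : ℝ)) / 2) q x η hdpos hqpos (hq ▸ dens_bound Δ hΔ) hx0.le hη0
        (by
          rw [hx, hη]
          apply le_of_eq
          field_simp
          norm_num)
        (by rw [Finset.nonempty_Ico]; omega) hBne
        (by rw [Nat.card_Ico, Nat.add_sub_cancel_left]; exact hden)
      rw [Nat.card_Ico, Nat.add_sub_cancel_left] at hAcard
      refine ⟨a', A, hAU, by omega, ?_, hAcard, ?_⟩
      · have e3 : (8 * Δ + 1) * C * up (i+1) = 8 * Δ * m + m + (8 * Δ + 1) * C * up (i+1+1) := by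
          rw [hu2, hm]; ring
        omega
      · refine core_step R E g N Δ p hΔ hp hg hin hout q x η hq hx hη i a' a
          m' (lv i) rfl hl0 B A ha2 hAU (by omega) (by rw [hm', hC]) hAcard ?_ hE
        refine lt_of_le_of_lt (le_of_eq ?_) hbad
        simp [gcnt]
  obtain ⟨a, A, hA, haN, hNa, hAcard, hE⟩ := main (H - 1) 0 (by omega)
  obtain ⟨φ, h1, h2, h3, h4⟩ := hE (fun _ => A) (by
    intro w _
    refine ⟨Finset.Subset.refl _, ?_⟩
    have hx1 : x ≤ 1 := by
      rw [hx, div_le_one (by positivity)]; linarith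
    have : (0:ℝ) ≤ A.card := Nat.cast_nonneg _
    nlinarith)
  refine ⟨φ, ?_, fun w => (h2 w (Nat.zero_le _)).2, fun u v => h4 u v (Nat.zero_le _)⟩
  intro u v huv
  exact h1 (Nat.zero_le (g u)) (Nat.zero_le (g v)) huv

/-- If `D` is a graded digraph on `n` vertices with at least one edge,
maximum in-degree `Δ⁻` and maximum out-degree `Δ⁺`, then
`r⃗(D) ≤ 10⁹ · Δ⁺ · (Δ⁻)² · 2^(4Δ⁻) · n`. -/
theorem graded_oriented_ramsey_upper_in_out {V : Type} [Fintype V] (D : Digraph V)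
    (n Δminus Δplus : ℕ)
    (hn : Fintype.card V = n)
    (hgraded : ∃ f : V → ℕ, ∀ u v : V, D.Adj u v → f v = f u + 1)
    (hedge : ∃ u v : V, D.Adj u v)
    (hin : ∀ v : V, D.inDegree v ≤ Δminus)
    (hout : ∀ v : V, D.outDegree v ≤ Δplus) :
    orientedRamsey D ≤ 10 ^ 9 * Δplus * Δminus ^ 2 * 2 ^ (4 * Δminus) * n := by
  classical
  obtain ⟨f, hf⟩ := hgraded
  have hin' : ∀ v, (Finset.univ.filter (fun u => D.Adj u v)).card ≤ Δminus := by
    intro v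
    refine le_trans (le_of_eq ?_) (hin v)
    rw [Digraph.inDegree, Nat.card_eq_fintype_card, ← Set.toFinset_card]
    congr 1
    ext u; simp
  have hout' : ∀ v, (Finset.univ.filter (fun u => D.Adj v u)).card ≤ Δplus := by
    intro v
    refine le_trans (le_of_eq ?_) (hout v)
    rw [Digraph.outDegree, Nat.card_eq_fintype_card, ← Set.toFinset_card]
    congr 1
    ext u; simp
  obtain ⟨u₀, v₀, he⟩ := hedge
  have hΔ : 1 ≤ Δminus := le_trans (Finset.card_pos.2 ⟨u₀, by simpa using he⟩) (hin' v₀)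
  have hp : 1 ≤ Δplus := le_trans (Finset.card_pos.2 ⟨v₀, by simpa using he⟩) (hout' u₀)
  let I : Finset ℕ := Finset.univ.image f
  let g : V → ℕ := fun v => (I.filter (fun j => j < f v)).card
  have hI : ∀ v, f v ∈ I := fun v => Finset.mem_image_of_mem _ (Finset.mem_univ v)
  have hg : ∀ u v, D.Adj u v → g v = g u + 1 := by
    intro u v huv
    have := hf u v huv
    simp only [g]
    rw [← Finset.card_insert_of_notMem (a := f u) (by simp)]
    congr 1
    ext j
    simp only [Finset.mem_filter, Finset.mem_insert]
    constructor
    · rintro ⟨h1, h2⟩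
      rcases Nat.lt_or_ge j (f u) with h | h
      · exact Or.inr ⟨h1, h⟩
      · left; omega
    · rintro (rfl | ⟨h1, h2⟩)
      · exact ⟨hI u, by omega⟩
      · exact ⟨h1, by omega⟩
  have hH : ∀ v, g v < I.card := by
    intro v
    apply Finset.card_lt_card
    rw [Finset.filter_ssubset]
    exact ⟨f v, hI v, by simp⟩
  have hlev : ∀ i < I.card, ∃ v, g v = i := by
    intro i hi
    have himg : Finset.univ.image g = Finset.range I.card := by
      apply Finset.eq_of_subset_of_card_le
      · intro j hj
        obtain ⟨v, _, rfl⟩ := Finset.mem_image.1 hj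
        exact Finset.mem_range.2 (hH v)
      · rw [Finset.card_range]
        have e : Finset.univ.image g = I.image (fun t => (I.filter (fun j => j < t)).card) := by
          rw [Finset.image_image]; rfl
        have key : ∀ s ∈ I, ∀ t ∈ I, s < t →
            (I.filter (fun j => j < s)).card < (I.filter (fun j => j < t)).card := by
          intro s hs t ht hst
          apply Finset.card_lt_card
          rw [Finset.ssubset_iff_of_subset]
          · exact ⟨s, by simp [hs, hst], by simp⟩
          · intro j hj
            simp only [Finset.mem_filter] at hj ⊢
            exact ⟨hj.1, by omega⟩
        have hinj : Set.InjOn (fun t => (I.filter (fun j => j < t)).card) (I : Set ℕ) := by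
         intro s hs t ht hst
         have hst : (I.filter (fun j => j < s)).card = (I.filter (fun j => j < t)).card := hst
         rcases lt_trichotomy s t with h | h | h
         · have := key s hs t ht h
           omega
         · exact h
         · have := key t ht s hs h
           omega
        exact le_of_eq ((Finset.card_image_of_injOn hinj).symm.trans (congrArg Finset.card e.symm))
    have : i ∈ Finset.univ.image g := by rw [himg]; exact Finset.mem_range.2 hi
    obtain ⟨v, _, hv⟩ := Finset.mem_image.1 this
    exact ⟨v, hv⟩
  apply Nat.sInf_le
  intro T hT
  obtain ⟨R, σ, hσ, hRσ, hmed⟩ := median_order T.Adj (fun u v huv h => by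
    have := hT.2 u v huv
    tauto)
  obtain ⟨φ, hφ, hφN, hφR⟩ := core R D.Adj g _ Δminus Δplus I.card hΔ hp hmed hg hlev hH
    (Finset.card_pos.2 ⟨f u₀, hI u₀⟩) hin' hout' (by
      rw [hn]
      apply Nat.mul_le_mul_right
      have e : (2:ℕ) ^ (4 * Δminus) = 16 ^ Δminus := by rw [pow_mul]; norm_num
      rw [e]
      have h1 : (8 * Δminus + 1) * 64 ≤ 10 ^ 9 * Δminus ^ 2 := by nlinarith
      calc (8 * Δminus + 1) * (64 * Δplus * 16 ^ Δminus)
          = ((8 * Δminus + 1) * 64) * (Δplus * 16 ^ Δminus) := by ring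
        _ ≤ (10 ^ 9 * Δminus ^ 2) * (Δplus * 16 ^ Δminus) := Nat.mul_le_mul_right _ h1
        _ = _ := by ring)
  refine ⟨fun v => σ (φ v) (hφN v), ?_, ?_⟩
  · intro u v h
    exact hφ (hσ _ _ _ _ h)
  · intro u v h
    exact hRσ _ _ _ _ (hφR u v h)
end

section
/- For all integers d ≥ 1 and k ≥ 1, the d-dimensional grid digraph Γ⃗_{d,k} satisfies r⃗(Γ⃗_{d,k}) ≤ 10⁹ · d³ · 2^(4d) · k^d, i.e., its oriented Ramsey number is at most 10⁹ d³ 2^(4d) times its number of vertices. -/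
/-- The `d`-dimensional grid digraph on vertex set `[k]^d`: there is an edge from `u` to `v`
iff `v` is obtained from `u` by increasing exactly one coordinate by one. -/
def gridDigraph (d k : ℕ) : Digraph (Fin d → Fin k) where
  Adj u v := ∃ i : Fin d, ((v i : ℕ) = (u i : ℕ) + 1) ∧ ∀ j : Fin d, j ≠ i → v j = u j


open Classical in
/-- number of forward pairs of a list -/
noncomputable def fwdCount {α : Type*} (r : α → α → Prop) : List α → ℕ
  | [] => 0
  | x :: l => l.countP (fun y => decide (r x y)) + fwdCount r l

open Classical in
theorem fwdCount_swap {α : Type*} (r : α → α → Prop) (c : α) (s : List α) (b : List α) :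
    fwdCount r (b ++ c :: s) + b.countP (fun y => decide (r c y)) =
      fwdCount r (c :: (b ++ s)) + b.countP (fun y => decide (r y c)) := by
  induction b with
  | nil => simp
  | cons x b ih =>
    simp only [fwdCount, List.cons_append, List.countP_append, List.countP_cons] at ih ⊢
    omega

open Classical in
theorem fwdCount_append_le {α : Type*} (r : α → α → Prop) (a l l' : List α) (hp : l.Perm l')
    (h : fwdCount r (a ++ l) ≤ fwdCount r (a ++ l')) : fwdCount r l ≤ fwdCount r l' := by
  induction a with
  | nil => simpa using h
  | cons x a ih =>
    apply ih
    simp only [fwdCount, List.cons_append, List.countP_append, hp.countP_eq] at h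
    omega

open Classical in
theorem exists_median_list {α : Type*} (r : α → α → Prop) (l0 : List α) :
    ∃ l : List α, l.Perm l0 ∧ ∀ a b c s, l = a ++ (b ++ c :: s) →
      b.countP (fun y => decide (r c y)) ≤ b.countP (fun y => decide (r y c)) := by
  obtain ⟨l, hl, hmax⟩ := Finset.exists_max_image l0.permutations.toFinset (fwdCount r)
    ⟨l0, by simp⟩
  simp only [List.mem_toFinset, List.mem_permutations] at hl hmax
  refine ⟨l, hl, ?_⟩
  rintro a b c s rfl
  have hp : (c :: (b ++ s)).Perm (b ++ c :: s) := List.perm_middle.symm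
  have h1 := hmax (a ++ (c :: (b ++ s))) ((hp.append_left a).trans hl)
  have h2 := fwdCount_append_le r a _ _ hp h1
  have h3 := fwdCount_swap r c s b
  omega

open Classical in
/-- Median order of a tournament. -/
theorem exists_median (N : ℕ) (T : Digraph (Fin N)) (hT : T.IsTournament) :
    ∃ (g : ℕ → Option (Fin N)) (R : ℕ → ℕ → Prop),
      (∀ x y, x < N → y < N → g x = g y → x = y) ∧ (∀ x < N, (g x).isSome) ∧
      (∀ x y, R x y → ∀ u v, g x = some u → g y = some v → T.Adj u v) ∧
      ∀ i j, i ≤ j → j < N → j - i ≤ 2 * ((Finset.Ico i j).filter (fun x => R x j)).card := by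
  obtain ⟨l, hl, hmed⟩ := exists_median_list T.Adj (List.finRange N)
  have hlen : l.length = N := by simpa using hl.length_eq
  have hnd : l.Nodup := hl.nodup_iff.mpr (List.nodup_finRange N)
  refine ⟨fun i => l[i]?, fun x y => ∃ u v, l[x]? = some u ∧ l[y]? = some v ∧ T.Adj u v,
    ?_, ?_, ?_, ?_⟩
  · intro x y hx hy h
    exact (List.getElem?_inj (by rw [hlen]; exact hx) hnd).mp h
  · intro x hx
    simp [hlen, hx]
  · rintro x y ⟨u, v, h1, h2, h3⟩ u' v' h1' h2'
    grind
  · intro i j hij hj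
    have hj' : j < l.length := by rw [hlen]; exact hj
    set b : List (Fin N) := (l.drop i).take (j - i) with hb
    have hsplit : l = l.take i ++ (b ++ l[j] :: l.drop (j+1)) := by
      have h1 : l.drop i = b ++ (l.drop i).drop (j - i) := (List.take_append_drop _ _).symm
      have h2 : (l.drop i).drop (j - i) = l[j] :: l.drop (j+1) := by
        rw [List.drop_drop, show i + (j - i) = j by omega, List.drop_eq_getElem_cons hj']
      rw [← h2, ← h1, List.take_append_drop]
    have h := hmed _ _ _ _ hsplit
    have hbm : b.map some = (List.range' i (j-i)).map (fun x => l[x]?) := by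
      apply List.ext_getElem
      · simp [hb]; omega
      · intro n h1 h2
        simp at h1 h2
        simp [hb]
    have hlenb : b.length = j - i := by simp [hb]; omega
    have hcard : ((Finset.Ico i j).filter (fun x => ∃ u v, l[x]? = some u ∧ l[j]? = some v ∧ T.Adj u v)).card
        = b.countP (fun y => decide (T.Adj y l[j])) := by
      have e1 : b.countP (fun y => decide (T.Adj y l[j])) =
          (b.map some).countP (fun y => decide (∃ u v, y = some u ∧ l[j]? = some v ∧ T.Adj u v)) := by
        rw [List.countP_map]
        congr 1
        funext y
        simp [hj']
      rw [e1, hbm, List.countP_map, List.countP_eq_length_filter]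
      rfl
    simp only []
    rw [hcard]
    have hnot : b.countP (fun y => decide (T.Adj l[j] y)) + b.countP (fun y => decide (T.Adj y l[j])) = b.length := by
      rw [List.length_eq_countP_add_countP (fun y => decide (T.Adj l[j] y)) (l := b)]
      congr 1
      apply List.countP_congr
      intro y hy
      have hne : l[j] ≠ y := by
        rintro rfl
        rw [hsplit] at hnd
        have := (List.nodup_append.mp hnd).2.1
        have := (List.nodup_append.mp this).2.2 _ hy l[j] List.mem_cons_self
        exact this rfl
      have := hT.2 _ _ hne
      simp
      tauto
    omega

open Classical in
/-- number of bad `r`-extensions of `Y` -/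
noncomputable def badCount (Bad : Finset ℕ → Prop) (X : Finset ℕ) (r : ℕ) (Y : Finset ℕ) : ℕ :=
  ((Fintype.piFinset (fun _ : Fin r => X)).filter
    (fun f => Bad (Y ∪ Finset.univ.image f))).card

open Classical in
theorem badCount_succ (Bad : Finset ℕ → Prop) (X : Finset ℕ) (r : ℕ) (Y : Finset ℕ) :
    ∑ x ∈ X, badCount Bad X r (insert x Y) = badCount Bad X (r+1) Y := by
  unfold badCount
  rw [Finset.card_eq_sum_card_fiberwise (f := fun f : Fin (r+1) → ℕ => f 0) (t := X)]
  · apply Finset.sum_congr rfl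
    intro x hx
    have key : ∀ f : Fin r → ℕ, insert x Y ∪ Finset.univ.image f
        = Y ∪ Finset.univ.image (Fin.cons x f : Fin (r+1) → ℕ) := by
      intro f
      ext y
      simp only [Finset.mem_union, Finset.mem_insert, Finset.mem_image, Finset.mem_univ, true_and,
        Fin.exists_fin_succ, Fin.cons_zero, Fin.cons_succ]
      grind
    apply Finset.card_nbij' (fun f => (Fin.cons x f : Fin (r+1) → ℕ)) (fun f => Fin.tail f)
    · intro f hf
      simp only [Finset.coe_filter, Set.mem_ofPred_eq, Fintype.mem_piFinset, Finset.mem_filter] at hf ⊢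
      rw [key] at hf
      refine ⟨⟨?_, hf.2⟩, by simp⟩
      intro i
      refine Fin.cases ?_ ?_ i
      · simpa using hx
      · intro j; simpa using hf.1 j
    · intro f hf
      simp only [Finset.coe_filter, Set.mem_ofPred_eq, Fintype.mem_piFinset, Finset.mem_filter] at hf ⊢
      refine ⟨fun i => hf.1.1 i.succ, ?_⟩
      rw [key, ← hf.2, Fin.cons_self_tail]
      exact hf.1.2
    · intro f hf
      simp
    · intro f hf
      simp only [Finset.coe_filter, Set.mem_ofPred_eq, Finset.mem_filter] at hf
      simp [← hf.2]
  · intro f hf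
    simp only [Finset.coe_filter, Set.mem_ofPred_eq, Fintype.mem_piFinset] at hf
    exact hf.1 0

open Classical in
theorem badCount_of_bad (Bad : Finset ℕ → Prop) (hmono : ∀ Y Z, Y ⊆ Z → Bad Y → Bad Z)
    (X : Finset ℕ) (r : ℕ) (Y : Finset ℕ) (h : Bad Y) : badCount Bad X r Y = X.card ^ r := by
  unfold badCount
  rw [Finset.filter_true_of_mem]
  · simp
  · intro f _
    exact hmono _ _ Finset.subset_union_left h

open Classical in
theorem level_embed {V W : Type*} (S : Finset V) (F : Finset W) (e : W → Finset V) (d : ℕ)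
    (X : Finset ℕ) (Bad : Finset ℕ → Prop) (hmono : ∀ Y Z, Y ⊆ Z → Bad Y → Bad Z)
    (τ : ℝ) (hτ0 : 0 < τ) (hτ1 : τ ≤ 1) (hd : 1 ≤ d)
    (he : ∀ w ∈ F, (e w).card ≤ d) (heS : ∀ w ∈ F, e w ⊆ S)
    (hdeg : ∀ v ∈ S, (F.filter (fun w => v ∈ e w)).card ≤ d)
    (hbad : F.Nonempty → (badCount Bad X d ∅ : ℝ) < (τ / (2 * d) * X.card) ^ d)
    (C : V → Finset ℕ) (hC : ∀ v ∈ S, C v ⊆ X ∧ τ * X.card ≤ (C v).card)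
    (hS : (S.card : ℝ) ≤ τ / 2 * X.card) :
    ∃ φ : V → ℕ, Set.InjOn φ S ∧ (∀ v ∈ S, φ v ∈ C v) ∧ ∀ w ∈ F, ¬ Bad ((e w).image φ) := by
  have hd0 : (0 : ℝ) < d := by exact_mod_cast hd
  set γ : ℝ := τ / (2 * d) with hγ
  have hγ0 : 0 < γ := by positivity
  have hγ1 : γ ≤ 1 := by
    rw [hγ, div_le_one (by positivity)]
    have : (1 : ℝ) ≤ d := by exact_mod_cast hd
    linarith
  have main : ∀ S' : Finset V, S' ⊆ S → ∃ φ : V → ℕ, Set.InjOn φ S' ∧ (∀ v ∈ S', φ v ∈ C v) ∧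
      ∀ w ∈ F, (badCount Bad X (d - (e w ∩ S').card) ((e w ∩ S').image φ) : ℝ)
        < (γ * X.card) ^ (d - (e w ∩ S').card) := by
    intro S'
    induction S' using Finset.induction_on with
    | empty =>
      intro _
      refine ⟨fun _ => 0, by simp, by simp, ?_⟩
      intro w hw
      simpa using hbad ⟨w, hw⟩
    | insert v S' hv ih =>
      intro hsub
      obtain ⟨φ, hinj, hφC, hφ⟩ := ih (fun x hx => hsub (Finset.mem_insert_of_mem hx))
      have hvS : v ∈ S := hsub (Finset.mem_insert_self _ _)
      have hScard : S'.card + 1 ≤ S.card := by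
        rw [← Finset.card_insert_of_notMem hv]; exact Finset.card_le_card hsub
      have hm : (0 : ℝ) < X.card := by
        have : (1 : ℝ) ≤ S.card := by exact_mod_cast (by omega : 1 ≤ S.card)
        by_contra hcon
        have : (X.card : ℝ) ≤ 0 := not_lt.mp hcon
        nlinarith
      set G : W → ℕ → Prop := fun w x =>
        (badCount Bad X (d - (e w ∩ S').card - 1) (insert x ((e w ∩ S').image φ)) : ℝ)
          < (γ * X.card) ^ (d - (e w ∩ S').card - 1) with hG
      have hlt : ∀ w ∈ F, v ∈ e w → (e w ∩ S').card + 1 ≤ d := by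
        intro w hw hvw
        have : insert v (e w ∩ S') ⊆ e w := by
          intro y hy
          rcases Finset.mem_insert.mp hy with rfl | hy
          · exact hvw
          · exact (Finset.mem_inter.mp hy).1
        have h2 := Finset.card_le_card this
        rw [Finset.card_insert_of_notMem (by simp [hv])] at h2
        exact h2.trans (he w hw)
      have hfew : ∀ w ∈ F, v ∈ e w → ((X.filter (fun x => ¬ G w x)).card : ℝ) ≤ γ * X.card := by
        intro w hw hvw
        have hr := hlt w hw hvw
        obtain ⟨r, hr'⟩ : ∃ r, d - (e w ∩ S').card = r + 1 := ⟨d - (e w ∩ S').card - 1, by omega⟩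
        have h1 := hφ w hw
        rw [hr', ← badCount_succ] at h1
        have h2 : ((X.filter (fun x => ¬ G w x)).card : ℝ) * (γ * X.card) ^ r
            ≤ ∑ x ∈ X, (badCount Bad X r (insert x ((e w ∩ S').image φ)) : ℝ) := by
          calc ((X.filter (fun x => ¬ G w x)).card : ℝ) * (γ * X.card) ^ r
              = ∑ x ∈ X.filter (fun x => ¬ G w x), (γ * X.card) ^ r := by simp
            _ ≤ ∑ x ∈ X.filter (fun x => ¬ G w x),
                  (badCount Bad X r (insert x ((e w ∩ S').image φ)) : ℝ) := by
                apply Finset.sum_le_sum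
                intro x hx
                have := (Finset.mem_filter.mp hx).2
                simp only [hG, hr', Nat.add_sub_cancel, not_lt] at this
                exact this
            _ ≤ _ := Finset.sum_le_sum_of_subset_of_nonneg (Finset.filter_subset _ _)
                (fun _ _ _ => by positivity)
        push_cast at h1
        rw [pow_succ'] at h1
        have hpos : 0 < (γ * X.card) ^ r := by positivity
        exact le_of_mul_le_mul_right (h2.trans h1.le) hpos
      set U : Finset ℕ := S'.image φ ∪ (F.filter (fun w => v ∈ e w)).biUnion
        (fun w => X.filter (fun x => ¬ G w x)) with hU
      have hUcard : (U.card : ℝ) ≤ S'.card + d * (γ * X.card) := by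
        have h1 : U.card ≤ S'.card + ∑ w ∈ F.filter (fun w => v ∈ e w),
            (X.filter (fun x => ¬ G w x)).card :=
          (Finset.card_union_le _ _).trans (add_le_add Finset.card_image_le Finset.card_biUnion_le)
        have h2 : (∑ w ∈ F.filter (fun w => v ∈ e w), ((X.filter (fun x => ¬ G w x)).card : ℝ))
            ≤ (F.filter (fun w => v ∈ e w)).card * (γ * X.card) := by
          rw [← nsmul_eq_mul]
          apply Finset.sum_le_card_nsmul
          intro w hw
          exact hfew w (Finset.mem_filter.mp hw).1 (Finset.mem_filter.mp hw).2
        have h3 : ((F.filter (fun w => v ∈ e w)).card : ℝ) ≤ d := by exact_mod_cast hdeg v hvS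
        have h4 : ((F.filter (fun w => v ∈ e w)).card : ℝ) * (γ * X.card) ≤ d * (γ * X.card) :=
          mul_le_mul_of_nonneg_right h3 (by positivity)
        have h1' : (U.card : ℝ) ≤ S'.card + ∑ w ∈ F.filter (fun w => v ∈ e w),
            ((X.filter (fun x => ¬ G w x)).card : ℝ) := by exact_mod_cast h1
        linarith
      have hUlt : U.card < (C v).card := by
        have h1 := (hC v hvS).2
        have h2 : (S'.card : ℝ) + 1 ≤ S.card := by exact_mod_cast hScard
        have h3 : d * (γ * X.card) = τ / 2 * X.card := by
          rw [hγ]; field_simp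
        have : (U.card : ℝ) < (C v).card := by linarith
        exact_mod_cast this
      obtain ⟨x, hxC, hxU⟩ := Finset.exists_mem_notMem_of_card_lt_card hUlt
      have hxX : x ∈ X := (hC v hvS).1 hxC
      have hx1 : ∀ u ∈ S', φ u ≠ x := by
        intro u hu h
        exact hxU (Finset.mem_union_left _ (Finset.mem_image.mpr ⟨u, hu, h⟩))
      have hx2 : ∀ w ∈ F, v ∈ e w → G w x := by
        intro w hw hvw
        by_contra hcon
        apply hxU
        refine Finset.mem_union_right _ (Finset.mem_biUnion.mpr ⟨w, ?_, ?_⟩)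
        · simp [hw, hvw]
        · simp [hxX, hcon]
      have hupd : ∀ u ∈ S', Function.update φ v x u = φ u := by
        intro u hu
        rw [Function.update_of_ne]
        rintro rfl
        exact hv hu
      refine ⟨Function.update φ v x, ?_, ?_, ?_⟩
      · rw [Finset.coe_insert, Set.injOn_insert (by simpa using hv)]
        refine ⟨fun a ha b hb hab => ?_, ?_⟩
        · rw [hupd a ha, hupd b hb] at hab
          exact hinj ha hb hab
        · rintro ⟨u, hu, h⟩
          rw [hupd u hu, Function.update_self] at h
          exact hx1 u hu h
      · intro u hu
        rcases Finset.mem_insert.mp hu with rfl | hu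
        · simpa using hxC
        · rw [hupd u hu]; exact hφC u hu
      · intro w hw
        have himg : (e w ∩ S').image (Function.update φ v x) = (e w ∩ S').image φ := by
          apply Finset.image_congr
          intro u hu
          exact hupd u (Finset.mem_inter.mp hu).2
        by_cases hvw : v ∈ e w
        · have h1 : e w ∩ insert v S' = insert v (e w ∩ S') :=
            Finset.inter_insert_of_mem hvw
          rw [h1, Finset.card_insert_of_notMem (by simp [hv]), Finset.image_insert, himg,
            Function.update_self, ← Nat.sub_sub]
          exact hx2 w hw hvw
        · rw [Finset.inter_insert_of_notMem hvw, himg]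
          exact hφ w hw
  obtain ⟨φ, h1, h2, h3⟩ := main S subset_rfl
  refine ⟨φ, h1, h2, ?_⟩
  intro w hw hB
  have h := h3 w hw
  rw [Finset.inter_eq_left.mpr (heS w hw), badCount_of_bad Bad hmono _ _ _ hB] at h
  push_cast at h
  have : (γ * X.card) ^ (d - (e w).card) ≤ (X.card : ℝ) ^ (d - (e w).card) := by
    apply pow_le_pow_left₀ (by positivity)
    nlinarith [Nat.cast_nonneg (α := ℝ) X.card]
  linarith

open Classical in
/-- common out-neighbourhood of `Y` in `B` -/
noncomputable def cnbr (R : ℕ → ℕ → Prop) (B : Finset ℕ) (Y : Finset ℕ) : Finset ℕ :=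
  B.filter (fun b => ∀ y ∈ Y, R y b)

open Classical in
/-- Dependent random choice. -/
theorem drc_s2 (R : ℕ → ℕ → Prop) (A B : Finset ℕ) (hA : A.Nonempty) (hB : B.Nonempty)
    (d t : ℕ) (hd : 1 ≤ d) (p τ : ℝ) (hp : 0 < p) (hτ : 0 < τ)
    (hdens : p * A.card * B.card ≤ ∑ a ∈ A, ((B.filter (fun b => R a b)).card : ℝ)) :
    ∃ X ⊆ A, p ^ t * A.card / 2 ≤ X.card ∧
      (badCount (fun Y => ((cnbr R B Y).card : ℝ) < τ * B.card) X d ∅ : ℝ)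
        ≤ 2 * (τ / p ^ d) ^ t * (X.card : ℝ) ^ d := by
  set Bad : Finset ℕ → Prop :=
    fun Y => ((cnbr R B Y).card : ℝ) < τ * B.card with hBad
  set Ω : Finset (Fin t → ℕ) := Fintype.piFinset (fun _ : Fin t => B) with hΩ
  set XT : (Fin t → ℕ) → Finset ℕ := fun s => A.filter (fun a => ∀ i, R a (s i)) with hXT
  have hb : (0 : ℝ) < B.card := by exact_mod_cast hB.card_pos
  have ha : (0 : ℝ) < A.card := by exact_mod_cast hA.card_pos
  have hΩcard : (Ω.card : ℝ) = (B.card : ℝ) ^ t := by simp [hΩ]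
  have hΩne : Ω.Nonempty := by
    rw [← Finset.card_pos, hΩ]; simp [hB.card_pos]
  -- counting tuples in the common neighbourhood
  have hcommon : ∀ P : ℕ → Prop, (Ω.filter (fun s => ∀ i, P (s i))).card = (B.filter P).card ^ t := by
    intro P
    have : Ω.filter (fun s => ∀ i, P (s i)) = Fintype.piFinset (fun _ : Fin t => B.filter P) := by
      ext s
      simp only [hΩ, Finset.mem_filter, Fintype.mem_piFinset]
      exact forall_and.symm
    rw [this]; simp
  -- power mean
  have hpm : ∀ {ι : Type} (s : Finset ι) (f : ι → ℝ) (n : ℕ) (c : ℝ), 0 ≤ c → s.Nonempty →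
      (∀ i ∈ s, 0 ≤ f i) → c * s.card ≤ ∑ i ∈ s, f i → c ^ n * s.card ≤ ∑ i ∈ s, f i ^ n := by
    intro ι s f n c hc hs hf h
    have hspos : (0 : ℝ) < s.card := by exact_mod_cast hs.card_pos
    have h1 := Real.pow_arith_mean_le_arith_mean_pow s (fun _ => (1 : ℝ) / s.card) f
      (fun _ _ => by positivity) (by simp [hspos.ne']) hf n
    rw [← Finset.mul_sum, ← Finset.mul_sum] at h1
    have h2 : c ≤ 1 / s.card * ∑ i ∈ s, f i := by
      rw [one_div, inv_mul_eq_div, le_div_iff₀ hspos]; exact h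
    have h3 := (pow_le_pow_left₀ hc h2 n).trans h1
    rw [one_div, inv_mul_eq_div, le_div_iff₀ hspos] at h3
    exact h3
  have hsum1 : (∑ s ∈ Ω, ((XT s).card : ℝ)) = ∑ a ∈ A, ((B.filter (fun b => R a b)).card : ℝ) ^ t := by
    have : ∑ s ∈ Ω, (XT s).card = ∑ a ∈ A, (B.filter (fun b => R a b)).card ^ t := by
      simp_rw [← hcommon, hXT]
      exact Finset.sum_card_bipartiteAbove_eq_sum_card_bipartiteBelow (fun (s : Fin t → ℕ) (a : ℕ) => ∀ i, R a (s i))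
    exact_mod_cast this
  have hsum2 : (p ^ t * A.card) * Ω.card ≤ ∑ s ∈ Ω, ((XT s).card : ℝ) := by
    rw [hsum1, hΩcard]
    have := hpm A (fun a => ((B.filter (fun b => R a b)).card : ℝ)) t (p * B.card) (by positivity) hA
      (fun _ _ => by positivity) (by linarith)
    rw [mul_pow] at this
    linarith
  have hsum3 : (p ^ t * A.card) ^ d * Ω.card ≤ ∑ s ∈ Ω, ((XT s).card : ℝ) ^ d :=
    hpm Ω _ d _ (by positivity) hΩne (fun _ _ => by positivity) hsum2
  have hbadsum : (∑ s ∈ Ω, (badCount Bad (XT s) d ∅ : ℝ)) ≤ (A.card : ℝ) ^ d * (τ * B.card) ^ t := by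
    have h1 : ∀ s, badCount Bad (XT s) d ∅ =
        (((Fintype.piFinset (fun _ : Fin d => A)).filter (fun f => Bad (Finset.univ.image f))).filter
          (fun f => ∀ i, ∀ y ∈ Finset.univ.image f, R y (s i))).card := by
      intro s
      unfold badCount
      congr 1
      ext f
      simp only [hXT, Finset.mem_filter, Fintype.mem_piFinset, Finset.empty_union, Finset.mem_image,
        Finset.mem_univ, true_and, forall_exists_index, forall_apply_eq_imp_iff]
      constructor
      · rintro ⟨h, hB⟩
        exact ⟨⟨fun a => (h a).1, hB⟩, fun i a => (h a).2 i⟩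
      · rintro ⟨⟨h, hB⟩, h'⟩
        exact ⟨fun a => ⟨h a, fun i => h' i a⟩, hB⟩
    have h2 : ∑ s ∈ Ω, badCount Bad (XT s) d ∅ =
        ∑ f ∈ (Fintype.piFinset (fun _ : Fin d => A)).filter (fun f => Bad (Finset.univ.image f)),
          (B.filter (fun b => ∀ y ∈ Finset.univ.image f, R y b)).card ^ t := by
      simp_rw [h1]
      rw [Finset.sum_congr rfl (fun f _ => (hcommon _).symm)]
      exact Finset.sum_card_bipartiteAbove_eq_sum_card_bipartiteBelow
        (fun (s : Fin t → ℕ) (f : Fin d → ℕ) => ∀ i, ∀ y ∈ Finset.univ.image f, R y (s i))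
    have h3 : (∑ s ∈ Ω, (badCount Bad (XT s) d ∅ : ℝ)) =
        ∑ f ∈ (Fintype.piFinset (fun _ : Fin d => A)).filter (fun f => Bad (Finset.univ.image f)),
          ((B.filter (fun b => ∀ y ∈ Finset.univ.image f, R y b)).card : ℝ) ^ t := by
      exact_mod_cast h2
    rw [h3]
    calc _ ≤ ∑ f ∈ (Fintype.piFinset (fun _ : Fin d => A)).filter
              (fun f => Bad (Finset.univ.image f)), (τ * B.card) ^ t := by
          apply Finset.sum_le_sum
          intro f hf
          have := (Finset.mem_filter.mp hf).2
          refine pow_le_pow_left₀ (by positivity) ?_ t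
          refine le_trans (le_of_eq ?_) this.le
          unfold cnbr
          congr
      _ = (((Fintype.piFinset (fun _ : Fin d => A)).filter
              (fun f => Bad (Finset.univ.image f))).card : ℝ) * (τ * B.card) ^ t := by simp
      _ ≤ (A.card : ℝ) ^ d * (τ * B.card) ^ t := by
          apply mul_le_mul_of_nonneg_right _ (by positivity)
          have : ((Fintype.piFinset (fun _ : Fin d => A)).filter
              (fun f => Bad (Finset.univ.image f))).card ≤ A.card ^ d := by
            refine (Finset.card_filter_le _ _).trans ?_
            simp
          exact_mod_cast this
  set M : ℝ := (p ^ d) ^ t / (2 * τ ^ t) with hM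
  have hMpos : 0 < M := by positivity
  have hex : ∃ s ∈ Ω, (p ^ t * A.card) ^ d / 2 ≤ ((XT s).card : ℝ) ^ d - M * badCount Bad (XT s) d ∅ := by
    apply Finset.exists_le_of_sum_le hΩne
    rw [Finset.sum_sub_distrib, ← Finset.mul_sum, Finset.sum_const, nsmul_eq_mul]
    have h1 : M * ∑ s ∈ Ω, (badCount Bad (XT s) d ∅ : ℝ) ≤ M * ((A.card : ℝ) ^ d * (τ * B.card) ^ t) :=
      mul_le_mul_of_nonneg_left hbadsum hMpos.le
    have h2 : M * ((A.card : ℝ) ^ d * (τ * B.card) ^ t) = Ω.card * ((p ^ t * A.card) ^ d / 2) := by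
      rw [hM, hΩcard, mul_pow, mul_pow, ← pow_mul, ← pow_mul, mul_comm d t]
      field_simp
    linarith
  obtain ⟨s, hs, hval⟩ := hex
  refine ⟨XT s, Finset.filter_subset _ _, ?_, ?_⟩
  · have h1 : (p ^ t * A.card) ^ d / 2 ≤ ((XT s).card : ℝ) ^ d := by
      have : 0 ≤ M * badCount Bad (XT s) d ∅ := by positivity
      linarith
    have h2 : (p ^ t * A.card / 2) ^ d ≤ (p ^ t * A.card) ^ d / 2 := by
      rw [div_pow]
      apply div_le_div_of_nonneg_left (by positivity) (by norm_num)
      calc (2 : ℝ) = 2 ^ 1 := by norm_num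
        _ ≤ 2 ^ d := pow_le_pow_right₀ (by norm_num) hd
    exact le_of_pow_le_pow_left₀ (by omega) (by positivity) (h2.trans h1)
  · have h1 : M * badCount Bad (XT s) d ∅ ≤ ((XT s).card : ℝ) ^ d := by
      have : 0 ≤ (p ^ t * A.card) ^ d / 2 := by positivity
      linarith
    have h2 : 2 * (τ / p ^ d) ^ t = 1 / M := by
      rw [hM, div_pow]; field_simp
    rw [h2, one_div, inv_mul_eq_div, le_div_iff₀ hMpos]
    linarith

open Classical in
theorem chain_step {V : Type*} [Fintype V] (Adj : V → V → Prop) (lev : V → ℕ)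
    (R : ℕ → ℕ → Prop) (d q K t N : ℕ) (p τ : ℝ) (hd : 1 ≤ d) (hp : 0 < p)
    (hτ0 : 0 < τ) (hτ1 : τ ≤ 1)
    (hlev : ∀ u v, Adj u v → lev v = lev u + 1)
    (hin : ∀ w, (Finset.univ.filter (fun u => Adj u w)).card ≤ d)
    (hout : ∀ u, (Finset.univ.filter (fun w => Adj u w)).card ≤ d)
    (n : ℕ → ℕ) (hndef : ∀ i, n i = (Finset.univ.filter (fun v => lev v = i)).card)
    (hmed : ∀ i j, i ≤ j → j < N →
      j - i ≤ 2 * ((Finset.Ico i j).filter (fun x => R x j)).card)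
    (h1 : 2 * (τ / p ^ d) ^ t < (τ / (2 * d)) ^ d)
    (h3 : 1 ≤ τ / 4 * p ^ t * K) (h4 : (d : ℝ) ≤ (1 - 2 * p) * q)
    (i : ℕ) (hni : 0 < n i) (hni' : 0 < n (i+1)) (hn : n (i+1) ≤ d * n i)
    (a' : ℕ) (X' : Finset ℕ) (ha' : q * K * n i ≤ a') (haN' : a' + K * n (i+1) ≤ N)
    (hX' : X' ⊆ Finset.Ico a' (a' + K * n (i+1)))
    (hXc' : (n (i+1) : ℝ) ≤ τ / 2 * X'.card)
    (hemb' : ∀ C : V → Finset ℕ, (∀ v, lev v = i+1 → C v ⊆ X' ∧ τ * X'.card ≤ (C v).card) →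
      ∃ φ : V → ℕ, (∀ u v, i+1 ≤ lev u → i+1 ≤ lev v → φ u = φ v → u = v) ∧
        (∀ v, lev v = i+1 → φ v ∈ C v) ∧ (∀ v, i+1 ≤ lev v → a' ≤ φ v ∧ φ v < N) ∧
        ∀ u v, i+1 ≤ lev u → Adj u v → R (φ u) (φ v)) :
    ∃ (a : ℕ) (X : Finset ℕ), a' - q * K * n i ≤ a ∧ a + K * n i ≤ N ∧
      X ⊆ Finset.Ico a (a + K * n i) ∧ (n i : ℝ) ≤ τ / 2 * X.card ∧
    (∀ C : V → Finset ℕ, (∀ v, lev v = i → C v ⊆ X ∧ τ * X.card ≤ (C v).card) →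
      ∃ φ : V → ℕ, (∀ u v, i ≤ lev u → i ≤ lev v → φ u = φ v → u = v) ∧
        (∀ v, lev v = i → φ v ∈ C v) ∧ (∀ v, i ≤ lev v → a ≤ φ v ∧ φ v < N) ∧
        ∀ u v, i ≤ lev u → Adj u v → R (φ u) (φ v)) := by
  have hd0 : (0 : ℝ) < d := by exact_mod_cast hd
  have hK : 0 < K := by
    rcases Nat.eq_zero_or_pos K with rfl | h
    · norm_num at h3
    · exact h
  set l : ℕ := K * n i with hl
  have hlpos : 0 < l := Nat.mul_pos hK hni
  set a0 : ℕ := a' - q * l with ha0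
  have hql : q * l ≤ a' := by rw [hl, ← mul_assoc]; exact ha'
  have ha0' : a0 + q * l = a' := by omega
  have hX'ne : X'.Nonempty := by
    rw [Finset.nonempty_iff_ne_empty]
    rintro rfl
    simp at hXc'
    omega
  have hX'pos : (0 : ℝ) < X'.card := by exact_mod_cast hX'ne.card_pos
  -- in-degree into the window
  have hindeg : ∀ c ∈ X', p * (q * l : ℝ) ≤ (((Finset.Ico a0 a').filter (fun x => R x c)).card : ℝ) := by
    intro c hc
    have hc' := Finset.mem_Ico.mp (hX' hc)
    have hm := hmed a0 c (by omega) (by omega)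
    have hsub : (Finset.Ico a0 c).filter (fun x => R x c) ⊆
        (Finset.Ico a0 a').filter (fun x => R x c) ∪ Finset.Ico a' c := by
      intro x hx
      simp only [Finset.mem_filter, Finset.mem_Ico, Finset.mem_union] at hx ⊢
      rcases lt_or_ge x a' with h | h
      · left; exact ⟨⟨hx.1.1, h⟩, hx.2⟩
      · right; exact ⟨h, hx.1.2⟩
    have hcard := (Finset.card_le_card hsub).trans (Finset.card_union_le _ _)
    rw [Nat.card_Ico] at hcard
    have hK' : K * n (i+1) ≤ d * l := by
      calc K * n (i+1) ≤ K * (d * n i) := Nat.mul_le_mul_left _ hn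
        _ = d * l := by rw [hl]; ring
    have hfin : q * l ≤ 2 * ((Finset.Ico a0 a').filter (fun x => R x c)).card + d * l := by omega
    have hfin' : (q : ℝ) * l ≤ 2 * (((Finset.Ico a0 a').filter (fun x => R x c)).card : ℝ) + d * l := by
      exact_mod_cast hfin
    have hl0 : (0 : ℝ) ≤ l := by positivity
    nlinarith
  -- the parts
  set P : ℕ → Finset ℕ := fun j => Finset.Ico (a0 + j * l) (a0 + j * l + l) with hP
  have hpart : ∀ c, ((Finset.Ico a0 a').filter (fun x => R x c)).card
      ≤ ∑ j ∈ Finset.range q, ((P j).filter (fun x => R x c)).card := by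
    intro c
    refine le_trans (Finset.card_le_card ?_) Finset.card_biUnion_le
    intro x hx
    simp only [Finset.mem_filter, Finset.mem_Ico, Finset.mem_biUnion, Finset.mem_range, hP] at hx ⊢
    have hdm := Nat.div_add_mod (x - a0) l
    have hml := Nat.mod_lt (x - a0) hlpos
    have hcm := Nat.mul_comm l ((x - a0) / l)
    refine ⟨(x - a0) / l, ?_, ⟨?_, ?_⟩, hx.2⟩
    · rw [Nat.div_lt_iff_lt_mul hlpos]; omega
    · omega
    · omega
  have hq : 0 < q := by
    rcases Nat.eq_zero_or_pos q with rfl | h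
    · simp at h4; omega
    · exact h
  have hsumall : ∑ j ∈ Finset.range q, (p * l * X'.card : ℝ) ≤
      ∑ j ∈ Finset.range q, ∑ x ∈ P j, ((X'.filter (fun c => R x c)).card : ℝ) := by
    have hdc : ∀ j, ∑ x ∈ P j, (X'.filter (fun c => R x c)).card =
        ∑ c ∈ X', ((P j).filter (fun x => R x c)).card := fun j =>
      Finset.sum_card_bipartiteAbove_eq_sum_card_bipartiteBelow (fun (x c : ℕ) => R x c)
    have hdc' : ∀ j, ∑ x ∈ P j, ((X'.filter (fun c => R x c)).card : ℝ) =
        ∑ c ∈ X', (((P j).filter (fun x => R x c)).card : ℝ) := by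
      intro j; exact_mod_cast hdc j
    simp_rw [hdc']
    rw [Finset.sum_comm]
    calc ∑ j ∈ Finset.range q, (p * l * X'.card : ℝ) = ∑ c ∈ X', p * (q * l : ℝ) := by
          simp; ring
      _ ≤ _ := by
          apply Finset.sum_le_sum
          intro c hc
          refine (hindeg c hc).trans ?_
          exact_mod_cast hpart c
  obtain ⟨j, hj, hjd⟩ := Finset.exists_le_of_sum_le (by simpa using hq.ne') hsumall
  have hjq : j < q := Finset.mem_range.mp hj
  have hPcard : (P j).card = l := by simp [hP]
  have hPne : (P j).Nonempty := by rw [← Finset.card_pos, hPcard]; exact hlpos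
  obtain ⟨X, hXP, hXcard, hXbad⟩ := drc_s2 R (P j) X' hPne hX'ne d t hd p τ hp hτ0
    (by rw [hPcard]; exact hjd)
  rw [hPcard] at hXcard
  have hend : a0 + j * l + l ≤ a' := by
    have : (j + 1) * l ≤ q * l := Nat.mul_le_mul_right _ hjq
    rw [Nat.add_mul] at this
    omega
  have hni0 : (0 : ℝ) < n i := by exact_mod_cast hni
  have hnX : (n i : ℝ) ≤ τ / 2 * X.card := by
    have e1 : τ / 2 * (p ^ t * l / 2) ≤ τ / 2 * X.card :=
      mul_le_mul_of_nonneg_left hXcard (by positivity)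
    have e2 : τ / 2 * (p ^ t * l / 2) = (τ / 4 * p ^ t * K) * n i := by
      rw [hl]; push_cast; ring
    nlinarith
  have hXpos : (0 : ℝ) < X.card := by
    by_contra hcon
    have : (X.card : ℝ) ≤ 0 := not_lt.mp hcon
    nlinarith
  refine ⟨a0 + j * l, X, by rw [ha0, hl, ← mul_assoc]; omega, by omega, hXP, hnX, ?_⟩
  intro C hC
  set Bad : Finset ℕ → Prop := fun Y => ((cnbr R X' Y).card : ℝ) < τ * X'.card with hBad
  have hmono : ∀ Y Z, Y ⊆ Z → Bad Y → Bad Z := by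
    intro Y Z hYZ hY
    refine lt_of_le_of_lt ?_ hY
    have : (cnbr R X' Z).card ≤ (cnbr R X' Y).card := by
      apply Finset.card_le_card
      intro x hx
      simp only [cnbr, Finset.mem_filter] at hx ⊢
      exact ⟨hx.1, fun y hy => hx.2 y (hYZ hy)⟩
    exact_mod_cast this
  have hb : (badCount Bad X d ∅ : ℝ) < (τ / (2 * d) * X.card) ^ d := by
    refine lt_of_le_of_lt hXbad ?_
    rw [mul_pow]
    exact mul_lt_mul_of_pos_right h1 (by positivity)
  obtain ⟨ψ, hψinj, hψC, hψgood⟩ := level_embed (Finset.univ.filter (fun v => lev v = i))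
    (Finset.univ.filter (fun v => lev v = i + 1)) (fun w => Finset.univ.filter (fun u => Adj u w))
    d X Bad hmono τ hτ0 hτ1 hd (fun w _ => hin w)
    (by
      intro w hw u hu
      simp only [Finset.mem_filter, Finset.mem_univ, true_and] at hw hu ⊢
      have := hlev u w hu
      omega)
    (by
      intro v _
      refine le_trans (Finset.card_le_card ?_) (hout v)
      intro w hw
      simp only [Finset.mem_filter, Finset.mem_univ, true_and] at hw ⊢
      exact hw.2)
    (fun _ => hb) C
    (by
      intro v hv
      exact hC v (by simpa using hv))
    (by rw [← hndef]; exact hnX)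
  obtain ⟨φ, hφinj, hφC, hφrange, hφadj⟩ := hemb'
    (fun w => cnbr R X' ((Finset.univ.filter (fun u => Adj u w)).image ψ))
    (by
      intro w hw
      refine ⟨Finset.filter_subset _ _, ?_⟩
      exact not_lt.mp (hψgood w (by simpa using hw)))
  have hψX : ∀ v, lev v = i → ψ v ∈ P j := fun v hv =>
    hXP ((hC v hv).1 (hψC v (by simpa using hv)))
  have hψr : ∀ v, lev v = i → a0 + j * l ≤ ψ v ∧ ψ v < a' := by
    intro v hv
    have := Finset.mem_Ico.mp (hψX v hv)
    omega
  refine ⟨fun v => if lev v = i then ψ v else φ v, ?_, ?_, ?_, ?_⟩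
  · intro u v hu hv huv
    simp only [] at huv
    split_ifs at huv with e1 e2 e2
    · exact hψinj (by simpa using e1) (by simpa using e2) huv
    · have := hψr u e1
      have := hφrange v (by omega)
      omega
    · have := hψr v e2
      have := hφrange u (by omega)
      omega
    · exact hφinj u v (by omega) (by omega) huv
  · intro v hv
    simp only [hv, if_true]
    exact hψC v (by simpa using hv)
  · intro v hv
    simp only []
    split_ifs with e1
    · have := hψr v e1
      omega
    · have := hφrange v (by omega)
      omega
  · intro u v hu huv
    have hl' := hlev u v huv
    by_cases e1 : lev u = i
    · have e2 : lev v = i + 1 := by omega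
      simp only [e1, e2, if_true, show ¬ (i + 1 = i) by omega, if_false]
      have := hφC v e2
      simp only [cnbr, Finset.mem_filter] at this
      exact this.2 _ (Finset.mem_image.mpr ⟨u, by simpa using huv, rfl⟩)
    · simp only [e1, show ¬ (lev v = i) by omega, if_false]
      exact hφadj u v (by omega) huv

open Classical in
theorem graded_embed {V : Type*} [Fintype V] (Adj : V → V → Prop) (lev : V → ℕ)
    (R : ℕ → ℕ → Prop) (d q K t N : ℕ) (p τ : ℝ) (hd : 1 ≤ d) (hp : 0 < p) (hp1 : p ≤ 1)
    (hτ0 : 0 < τ) (hτ1 : τ ≤ 1)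
    (hlev : ∀ u v, Adj u v → lev v = lev u + 1)
    (hin : ∀ w, (Finset.univ.filter (fun u => Adj u w)).card ≤ d)
    (hout : ∀ u, (Finset.univ.filter (fun w => Adj u w)).card ≤ d)
    (hmed : ∀ i j, i ≤ j → j < N →
      j - i ≤ 2 * ((Finset.Ico i j).filter (fun x => R x j)).card)
    (h1 : 2 * (τ / p ^ d) ^ t < (τ / (2 * d)) ^ d)
    (h3 : 1 ≤ τ / 4 * p ^ t * K) (h4 : (d : ℝ) ≤ (1 - 2 * p) * q)
    (hpred : ∀ w, 0 < lev w → ∃ u, Adj u w)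
    (hne : Nonempty V) (hN : q * K * Fintype.card V ≤ N) :
    ∃ φ : V → ℕ, Function.Injective φ ∧ (∀ v, φ v < N) ∧ ∀ u v, Adj u v → R (φ u) (φ v) := by
  obtain ⟨top, -, htop⟩ := Finset.exists_max_image Finset.univ lev Finset.univ_nonempty
  set h := lev top with hh
  set n : ℕ → ℕ := fun i => (Finset.univ.filter (fun v => lev v = i)).card with hndef
  have hn : ∀ i, n (i+1) ≤ d * n i := by
    intro i
    have hsub : Finset.univ.filter (fun v => lev v = i+1) ⊆
        (Finset.univ.filter (fun v => lev v = i)).biUnion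
          (fun u => Finset.univ.filter (fun w => Adj u w)) := by
      intro w hw
      simp only [Finset.mem_filter, Finset.mem_univ, true_and, Finset.mem_biUnion] at hw ⊢
      obtain ⟨u, hu⟩ := hpred w (by omega)
      have := hlev u w hu
      exact ⟨u, by omega, hu⟩
    have := (Finset.card_le_card hsub).trans
      (Finset.card_biUnion_le_card_mul _ _ d (fun u _ => hout u))
    rw [mul_comm]
    exact this
  have hnpos : ∀ j, j ≤ h → 0 < n (h - j) := by
    intro j
    induction j with
    | zero =>
      intro _
      exact Finset.card_pos.mpr ⟨top, by simp [hh]⟩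
    | succ j ih =>
      intro hj
      have e := ih (by omega)
      have e2 := hn (h - (j+1))
      rw [show h - (j+1) + 1 = h - j by omega] at e2
      exact Nat.pos_of_mul_pos_left (lt_of_lt_of_le e e2)
  have hcardV : Fintype.card V = ∑ i ∈ Finset.range (h+1), n i := by
    rw [← Finset.card_univ]
    apply Finset.card_eq_sum_card_fiberwise
    intro v hv
    have := htop v (Finset.mem_univ _)
    simp; omega
  have hK : 0 < K := by
    rcases Nat.eq_zero_or_pos K with rfl | h
    · norm_num at h3
    · exact h
  have hq : 0 < q := by
    rcases Nat.eq_zero_or_pos q with rfl | h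
    · simp at h4; omega
    · exact h
  have main : ∀ j, j ≤ h → ∃ (a : ℕ) (X : Finset ℕ),
      q * K * (∑ i ∈ Finset.range (h - j), n i) ≤ a ∧ a + K * n (h - j) ≤ N ∧
      X ⊆ Finset.Ico a (a + K * n (h - j)) ∧ (n (h - j) : ℝ) ≤ τ / 2 * X.card ∧
    (∀ C : V → Finset ℕ, (∀ v, lev v = h - j → C v ⊆ X ∧ τ * X.card ≤ (C v).card) →
      ∃ φ : V → ℕ, (∀ u v, h - j ≤ lev u → h - j ≤ lev v → φ u = φ v → u = v) ∧
        (∀ v, lev v = h - j → φ v ∈ C v) ∧ (∀ v, h - j ≤ lev v → a ≤ φ v ∧ φ v < N) ∧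
        ∀ u v, h - j ≤ lev u → Adj u v → R (φ u) (φ v)) := by
    intro j
    induction j with
    | zero =>
      intro _
      simp only [Nat.sub_zero]
      have hbound : q * K * (∑ i ∈ Finset.range h, n i) + K * n h ≤ N := by
        rw [hcardV, Finset.sum_range_succ, mul_add] at hN
        have : 1 * (K * n h) ≤ q * (K * n h) := Nat.mul_le_mul_right _ hq
        rw [mul_assoc q K (n h)] at hN
        omega
      have hXn : (n h : ℝ) ≤ τ / 2 * (Finset.Ico (N - K * n h) (N - K * n h + K * n h)).card := by
        rw [Nat.card_Ico, Nat.add_sub_cancel_left]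
        push_cast
        have hpt : p ^ t ≤ 1 := pow_le_one₀ hp.le hp1
        have : τ / 4 * p ^ t * K ≤ τ / 2 * K := by
          apply mul_le_mul_of_nonneg_right _ (by positivity)
          nlinarith
        have hn0 : (0 : ℝ) ≤ n h := by positivity
        nlinarith
      refine ⟨N - K * n h, Finset.Ico (N - K * n h) (N - K * n h + K * n h), by omega, by omega,
        subset_rfl, hXn, ?_⟩
      intro C hC
      obtain ⟨φ, e1, e2, -⟩ := level_embed (Finset.univ.filter (fun v => lev v = h))
        (∅ : Finset V) (fun _ => ∅) d _ (fun _ => False) (by simp) τ hτ0 hτ1 hd (by simp) (by simp)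
        (by simp) (by simp) C (by intro v hv; exact hC v (by simpa using hv)) hXn
      have hlevh : ∀ v, h ≤ lev v → lev v = h := fun v hv =>
        le_antisymm (htop v (Finset.mem_univ _)) hv
      refine ⟨φ, ?_, ?_, ?_, ?_⟩
      · intro u v hu hv huv
        exact e1 (by simpa using hlevh u hu) (by simpa using hlevh v hv) huv
      · intro v hv
        exact e2 v (by simpa using hv)
      · intro v hv
        have hv' := hlevh v hv
        have := Finset.mem_Ico.mp ((hC v hv').1 (e2 v (by simpa using hv')))
        omega
      · intro u v hu huv
        have := hlev u v huv
        have := htop v (Finset.mem_univ _)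
        omega
    | succ j ih =>
      intro hj
      obtain ⟨a', X', g1, g2, g3, g4, g5⟩ := ih (by omega)
      have hp1 := hnpos (j+1) hj
      have hp2 := hnpos j (by omega)
      obtain ⟨i, hi⟩ : ∃ i, h - (j+1) = i := ⟨_, rfl⟩
      have hi' : h - j = i + 1 := by omega
      rw [hi'] at g1 g2 g3 g4 g5 hp2
      rw [hi] at hp1 ⊢
      rw [Finset.sum_range_succ, mul_add] at g1
      obtain ⟨a, X, k1, k2⟩ := chain_step Adj lev R d q K t N p τ hd hp hτ0 hτ1 hlev hin hout n
        (fun _ => rfl) hmed h1 h3 h4 i hp1 hp2 (hn i) a' X' (by omega) g2 g3 g4 g5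
      exact ⟨a, X, by omega, k2⟩
  obtain ⟨a, X, -, -, -, -, g⟩ := main h le_rfl
  simp only [Nat.sub_self] at g
  obtain ⟨φ, e1, -, e2, e3⟩ := g (fun _ => X) (fun v _ => ⟨subset_rfl, by
    have : (0 : ℝ) ≤ X.card := by positivity
    nlinarith⟩)
  exact ⟨φ, fun u v huv => e1 u v (Nat.zero_le _) (Nat.zero_le _) huv,
    fun v => (e2 v (Nat.zero_le _)).2, fun u v huv => e3 u v (Nat.zero_le _) huv⟩

theorem numeric_params (d : ℕ) (hd : 1 ≤ d) :
    ∃ (p τ : ℝ) (t : ℕ), 0 < p ∧ p ≤ 1 ∧ 0 < τ ∧ τ ≤ 1 ∧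
      2 * (τ / p ^ d) ^ t < (τ / (2 * d)) ^ d ∧
      1 ≤ τ / 4 * p ^ t * ((256 * d * 16 ^ d : ℕ) : ℝ) ∧
      (d : ℝ) ≤ (1 - 2 * p) * ((12 * d ^ 2 : ℕ) : ℝ) := by
  have hd1 : (1 : ℝ) ≤ d := by exact_mod_cast hd
  have hd0 : (0 : ℝ) < d := by linarith
  set c : ℝ := 1 - 1 / (12 * d) with hc
  have hx : 1 / (12 * (d : ℝ)) ≤ 1 / 12 := by
    apply one_div_le_one_div_of_le (by norm_num); linarith
  have hx0 : 0 < 1 / (12 * (d : ℝ)) := by positivity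
  have hc0 : 0 < c := by rw [hc]; linarith
  have hc1 : c ≤ 1 := by rw [hc]; linarith
  have hbern : ∀ m : ℕ, m ≤ 6 * d → (1 : ℝ) / 2 ≤ c ^ m := by
    intro m hm
    have h1 := one_add_mul_le_pow (a := -(1 / (12 * (d : ℝ)))) (by linarith) m
    have h2 : (m : ℝ) ≤ 6 * d := by exact_mod_cast hm
    have h3 : (m : ℝ) * (1 / (12 * d)) ≤ 6 * d * (1 / (12 * d)) :=
      mul_le_mul_of_nonneg_right h2 hx0.le
    have h4 : 6 * (d : ℝ) * (1 / (12 * d)) = 1 / 2 := by field_simp; norm_num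
    have h5 : 1 + -(1 / (12 * (d : ℝ))) = c := by rw [hc]; ring
    rw [h5] at h1
    linarith
  set t : ℕ := 2 * d + 4 + Nat.log 2 d with ht
  have hlog1 : 2 ^ Nat.log 2 d ≤ d := Nat.pow_log_le_self 2 (by omega)
  have hlog2 : d < 2 ^ (Nat.log 2 d + 1) := Nat.lt_pow_succ_log_self (by norm_num) d
  have hlog3 : Nat.log 2 d < d := Nat.log_lt_self 2 (by omega)
  have h4d : (0 : ℝ) < 4 ^ d := by positivity
  have h2t : (2 : ℝ) ^ t = 4 ^ d * 16 * 2 ^ Nat.log 2 d := by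
    rw [ht, pow_add, pow_add, pow_mul]; norm_num
  have h2t1 : (2 : ℝ) ^ t ≤ 16 * d * 4 ^ d := by
    have : (2 : ℝ) ^ Nat.log 2 d ≤ d := by exact_mod_cast hlog1
    rw [h2t]; nlinarith
  have h2t2 : 8 * d * 4 ^ d < (2 : ℝ) ^ t := by
    have : (d : ℝ) < 2 ^ Nat.log 2 d * 2 := by rw [pow_succ] at hlog2; exact_mod_cast hlog2
    rw [h2t]; nlinarith
  have hτeq : (c / 2 / 2) ^ d = c ^ d / 4 ^ d := by
    rw [div_div, div_pow]; norm_num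
  have hτlow : 1 / (2 * 4 ^ d) ≤ (c / 2 / 2) ^ d := by
    rw [hτeq, div_le_div_iff₀ (by positivity) h4d]
    have := hbern d (by omega)
    nlinarith
  refine ⟨c / 2, (c / 2 / 2) ^ d, t, by positivity, by linarith, by positivity, ?_, ?_, ?_, ?_⟩
  · exact pow_le_one₀ (by positivity) (by linarith)
  · have e1 : (c / 2 / 2) ^ d / (c / 2) ^ d = (1 / 2) ^ d := by
      rw [← div_pow]; congr 1; field_simp
    rw [e1, ← pow_mul, mul_comm d t, pow_mul]
    calc 2 * ((1 / 2 : ℝ) ^ t) ^ d ≤ 2 ^ d * ((1 / 2 : ℝ) ^ t) ^ d := by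
          apply mul_le_mul_of_nonneg_right _ (by positivity)
          calc (2 : ℝ) = 2 ^ 1 := by norm_num
            _ ≤ 2 ^ d := pow_le_pow_right₀ (by norm_num) hd
      _ = (2 * (1 / 2 : ℝ) ^ t) ^ d := by rw [mul_pow]
      _ < ((c / 2 / 2) ^ d / (2 * d)) ^ d := by
          apply pow_lt_pow_left₀ _ (by positivity) (by omega)
          rw [lt_div_iff₀ (by positivity)]
          refine lt_of_lt_of_le ?_ hτlow
          rw [one_div_pow, mul_one_div, div_mul_eq_mul_div, div_lt_div_iff₀ (by positivity) (by positivity)]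
          nlinarith
  · have e1 : 1 / (32 * d * 4 ^ d) ≤ (c / 2) ^ t := by
      rw [div_pow, div_le_div_iff₀ (by positivity) (by positivity)]
      have := hbern t (by omega)
      have e2 : (0 : ℝ) ≤ d * 4 ^ d := by positivity
      nlinarith
    have e2 : (1 / (2 * 4 ^ d)) / 4 * (1 / (32 * d * 4 ^ d)) ≤ (c / 2 / 2) ^ d / 4 * (c / 2) ^ t := by
      apply mul_le_mul _ e1 (by positivity) (by positivity)
      linarith
    have e3 : (1 / (2 * 4 ^ d)) / 4 * (1 / (32 * d * 4 ^ d)) * ((256 * d * 16 ^ d : ℕ) : ℝ) = 1 := by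
      push_cast
      have : (16 : ℝ) ^ d = 4 ^ d * 4 ^ d := by rw [← mul_pow]; norm_num
      rw [this]; field_simp; norm_num
    rw [← e3]
    exact mul_le_mul_of_nonneg_right e2 (by positivity)
  · have : (1 - 2 * (c / 2)) = 1 / (12 * d) := by rw [hc]; ring
    rw [this]; push_cast
    apply le_of_eq; field_simp

open Classical in
theorem grid_oriented_ramsey (d k : ℕ) (hd : 1 ≤ d) (hk : 1 ≤ k) :
    orientedRamsey (gridDigraph d k) ≤ 10 ^ 9 * d ^ 3 * 2 ^ (4 * d) * k ^ d := by
  apply Nat.sInf_le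
  intro T hT
  obtain ⟨g, R, hg1, hg2, hg3, hmed⟩ := exists_median _ T hT
  obtain ⟨p, τ, t, hp, hp1, hτ0, hτ1, h1, h3, h4⟩ := numeric_params d hd
  have hupd : ∀ u v : Fin d → Fin k, (gridDigraph d k).Adj u v →
      ∃ i, (v i : ℕ) = u i + 1 ∧ ∀ j, j ≠ i → v j = u j := fun u v h => h
  have hin : ∀ w : Fin d → Fin k,
      (Finset.univ.filter (fun u => (gridDigraph d k).Adj u w)).card ≤ d := by
    intro w
    have hsub : Finset.univ.filter (fun u => (gridDigraph d k).Adj u w) ⊆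
        Finset.univ.image (fun i : Fin d => Function.update w i
          ⟨(w i : ℕ) - 1, lt_of_le_of_lt (Nat.sub_le _ _) (w i).2⟩) := by
      intro u hu
      simp only [Finset.mem_filter, Finset.mem_univ, true_and, Finset.mem_image] at hu ⊢
      obtain ⟨i, hi, hj⟩ := hupd _ _ hu
      refine ⟨i, ?_⟩
      funext j
      by_cases e : j = i
      · subst e; apply Fin.ext; simp [hi]
      · simp [e, hj j e]
    simpa using (Finset.card_le_card hsub).trans Finset.card_image_le
  have hout : ∀ u : Fin d → Fin k,
      (Finset.univ.filter (fun w => (gridDigraph d k).Adj u w)).card ≤ d := by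
    intro u
    have hsub : Finset.univ.filter (fun w => (gridDigraph d k).Adj u w) ⊆
        Finset.univ.image (fun i : Fin d => Function.update u i
          (if h : (u i : ℕ) + 1 < k then ⟨(u i : ℕ) + 1, h⟩ else u i)) := by
      intro w hw
      simp only [Finset.mem_filter, Finset.mem_univ, true_and, Finset.mem_image] at hw ⊢
      obtain ⟨i, hi, hj⟩ := hupd _ _ hw
      refine ⟨i, ?_⟩
      funext j
      by_cases e : j = i
      · subst e
        have : (u j : ℕ) + 1 < k := by rw [← hi]; exact (w j).2
        apply Fin.ext; simp [hi, this]
      · simp [e, hj j e]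
    simpa using (Finset.card_le_card hsub).trans Finset.card_image_le
  obtain ⟨φ, hφ1, hφ2, hφ3⟩ := graded_embed (gridDigraph d k).Adj (fun u => ∑ i, (u i : ℕ)) R
    d (12 * d ^ 2) (256 * d * 16 ^ d) t _ p τ hd hp hp1 hτ0 hτ1
    (by
      intro u v huv
      obtain ⟨i, hi, hj⟩ := hupd _ _ huv
      rw [← Finset.add_sum_erase _ _ (Finset.mem_univ i),
        ← Finset.add_sum_erase _ (fun i => (u i : ℕ)) (Finset.mem_univ i), hi]
      have : ∑ x ∈ Finset.univ.erase i, (v x : ℕ) = ∑ x ∈ Finset.univ.erase i, (u x : ℕ) := by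
        apply Finset.sum_congr rfl
        intro x hx
        rw [hj x (Finset.ne_of_mem_erase hx)]
      rw [this]; ring)
    hin hout hmed h1 h3 h4
    (by
      intro w hw
      obtain ⟨i, -, hi⟩ := Finset.exists_ne_zero_of_sum_ne_zero hw.ne'
      refine ⟨Function.update w i ⟨(w i : ℕ) - 1, lt_of_le_of_lt (Nat.sub_le _ _) (w i).2⟩,
        i, ?_, ?_⟩
      · simp; omega
      · intro j hj; simp [hj])
    ⟨fun _ => ⟨0, hk⟩⟩
    (by
      simp only [Fintype.card_fun, Fintype.card_fin]
      have : 12 * d ^ 2 * (256 * d * 16 ^ d) * k ^ d = 3072 * (d ^ 3 * 2 ^ (4 * d) * k ^ d) := by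
        rw [pow_mul]; norm_num; ring
      rw [this]
      calc 3072 * (d ^ 3 * 2 ^ (4 * d) * k ^ d) ≤ 10 ^ 9 * (d ^ 3 * 2 ^ (4 * d) * k ^ d) :=
            Nat.mul_le_mul_right _ (by norm_num)
        _ = _ := by ring)
  refine ⟨fun v => (g (φ v)).get (hg2 _ (hφ2 v)), ?_, ?_⟩
  · intro u v huv
    apply hφ1
    apply hg1 _ _ (hφ2 u) (hφ2 v)
    exact Option.get_inj.mp huv
  · intro u v huv
    exact hg3 _ _ (hφ3 u v huv) _ _ (by simp) (by simp)
end
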